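/- arXiv:math/0208163 — 3 statements merged into one kernel-verified Lean document; each statement's English description precedes it below -/
import Mathlib

section
/- The matrix X' = (X'_{ij}) with X'_{ij} = X_{ij} − q⁻¹X_{1j}X_{in}X_{1n}⁻¹ (2 ≤ i ≤ m, 1 ≤ j ≤ n−1) is a generic q-quantum matrix: the algebra homomorphism O_q(M_{m−1,n−1}) → O_q(M_{m,n})[X_{1n}⁻¹] sending Y_{ij} to X'_{ij} is injective. -/
noncomputable section
open scoped BigOperators

/-- The defining relations of an `m × n` `q`-quantum matrix. -/
def IsQMat {k A : Type*} [Field k] [Ring A] [Algebra k A] (q : k) {m n : ℕ}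
    (X : Fin m → Fin n → A) : Prop :=
  (∀ (i : Fin m) (j l : Fin n), j < l → X i j * X i l = q • (X i l * X i j)) ∧
  (∀ (i r : Fin m) (j : Fin n), i < r → X i j * X r j = q • (X r j * X i j)) ∧
  (∀ (i r : Fin m) (j l : Fin n), i < r → j < l → X i l * X r j = X r j * X i l) ∧
  (∀ (i r : Fin m) (j l : Fin n), i < r → j < l →
    X i j * X r l - X r l * X i j = (q - q⁻¹) • (X i l * X r j))

/-- The relations defining `O_q(M_{m,n})` as a quotient of the free algebra. -/
inductive QMRel (k : Type*) [Field k] (q : k) (m n : ℕ) :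
    FreeAlgebra k (Fin m × Fin n) → FreeAlgebra k (Fin m × Fin n) → Prop
  | row (i : Fin m) (j l : Fin n) (h : j < l) :
      QMRel k q m n (FreeAlgebra.ι k (i, j) * FreeAlgebra.ι k (i, l))
        (q • (FreeAlgebra.ι k (i, l) * FreeAlgebra.ι k (i, j)))
  | col (i r : Fin m) (j : Fin n) (h : i < r) :
      QMRel k q m n (FreeAlgebra.ι k (i, j) * FreeAlgebra.ι k (r, j))
        (q • (FreeAlgebra.ι k (r, j) * FreeAlgebra.ι k (i, j)))
  | anti (i r : Fin m) (j l : Fin n) (h1 : i < r) (h2 : j < l) :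
      QMRel k q m n (FreeAlgebra.ι k (i, l) * FreeAlgebra.ι k (r, j))
        (FreeAlgebra.ι k (r, j) * FreeAlgebra.ι k (i, l))
  | diag (i r : Fin m) (j l : Fin n) (h1 : i < r) (h2 : j < l) :
      QMRel k q m n (FreeAlgebra.ι k (i, j) * FreeAlgebra.ι k (r, l))
        (FreeAlgebra.ι k (r, l) * FreeAlgebra.ι k (i, j) +
          (q - q⁻¹) • (FreeAlgebra.ι k (i, l) * FreeAlgebra.ι k (r, j)))

/-- The quantum matrix algebra `O_q(M_{m,n})`. -/
abbrev OqM (k : Type*) [Field k] (q : k) (m n : ℕ) := RingQuot (QMRel k q m n)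

/-- The canonical generators `X_{ij}` of `O_q(M_{m,n})`. -/
def qX (k : Type*) [Field k] (q : k) (m n : ℕ) (i : Fin m) (j : Fin n) : OqM k q m n :=
  RingQuot.mkAlgHom k (QMRel k q m n) (FreeAlgebra.ι k (i, j))

/-- The number of inversions (the length `ℓ(σ)`) of a permutation of `Fin t`. -/
def invCount {t : ℕ} (σ : Equiv.Perm (Fin t)) : ℕ :=
  Finset.card (Finset.univ.filter (fun p : Fin t × Fin t => p.1 < p.2 ∧ σ p.2 < σ p.1))

/-- The quantum determinant of a `t × t` matrix with entries in an algebra: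
`Σ_σ (-q)^{ℓ(σ)} M_{1,σ(1)} ⋯ M_{t,σ(t)}`. -/
def qdet {k : Type*} [Field k] {A : Type*} [Ring A] [Algebra k A] (q : k) {t : ℕ}
    (M : Fin t → Fin t → A) : A :=
  ∑ σ : Equiv.Perm (Fin t), ((-q) ^ invCount σ) • (List.ofFn (fun i => M i (σ i))).prod

/-- The quantum minor `[I|J]` of the matrix `X` on rows `I` and columns `J`. -/
def qminor {k : Type*} [Field k] {A : Type*} [Ring A] [Algebra k A] (q : k) {m n t : ℕ}
    (X : Fin m → Fin n → A) (I : Finset (Fin m)) (J : Finset (Fin n))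
    (hI : I.card = t) (hJ : J.card = t) : A :=
  qdet q (fun a b => X (I.orderIsoOfFin hI a) (J.orderIsoOfFin hJ b))

/-- The elements `X'_{ij} = X_{ij} - q⁻¹ X_{1j} X_{in} X_{1n}⁻¹` in a localisation of
`O_q(M_{m,n})` at the normal element `X_{1n}`, where `φ` is the localisation map and
`u = X_{1n}⁻¹`. -/
def Xp {k B : Type*} [Field k] [Ring B] [Algebra k B] (q : k) {m n : ℕ}
    (hm : 0 < m) (hn : 0 < n) (φ : OqM k q m n →ₐ[k] B) (u : B)
    (i : Fin m) (j : Fin n) : B :=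
  φ (qX k q m n i j) -
    q⁻¹ • (φ (qX k q m n ⟨0, hm⟩ j) * φ (qX k q m n i ⟨n - 1, by omega⟩) * u)

/-!
Let `V` be the quotient of `O_q(M_{m,n})` by the left ideal generated by `X_{1n} - 1` and the
`X_{in}` with `i > 1`. As a vector space it is `O_q(M_{m,n-1})`: the first `n - 1` columns act by
left multiplication, and the last column acts by operators read off from the `R`-matrix. On the
subalgebra `O_q(M_{m-1,n-1})` of `V` generated by the last `m - 1` rows, `X_{1n}` acts as the
identity and the `X_{in}` with `i > 1` act as zero, so `X'_{ij}` acts as left multiplication by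
`X_{ij}`. After clearing denominators, an element `y` of the kernel therefore sends `1 ∈ V` both to
`0` and to `y`.
-/

section QuantumMatrices

variable {k : Type*} [Field k] {q : k} {m n : ℕ}

theorem isQMat_iff_exchange {A : Type*} [Ring A] [Algebra k A] (hq : q ≠ 0)
    {X : Fin m → Fin n → A} :
    IsQMat q X ↔ ∀ i r j l,
      (if i = r then q else 1) • (X i j * X r l) +
          (if r < i then q - q⁻¹ else 0) • (X r j * X i l) =
        (if j = l then q else 1) • (X r l * X i j) +
          (if j < l then q - q⁻¹ else 0) • (X r j * X i l) := by
  constructor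
  · rintro ⟨row, col, anti, diag⟩ i r j l
    rcases lt_trichotomy i r with hi | rfl | hi <;> rcases lt_trichotomy j l with hj | rfl | hj
    · simp [hi.ne, hi.not_gt, hj.ne, hj, ← anti i r j l hi hj, ← diag i r j l hi hj]
    · simp [hi.ne, hi.not_gt, col i r j hi]
    · simp [hi.ne, hi.not_gt, hj.ne', hj.not_gt, anti i r l j hi hj]
    · simp only [row i j l hj, hj.ne, hj, lt_irrefl, if_true, if_false]
      match_scalars
      field_simp
      ring
    · simp
    · simp [row i l j hj, hj.ne', hj.not_gt]
    · simp [hi.ne', hi, hj.ne, hj, anti r i j l hi hj]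
    · simp only [col r i j hi, hi.ne', hi, lt_irrefl, if_true, if_false]
      match_scalars
      field_simp
      ring
    · simp [hi.ne', hi, hj.ne', hj.not_gt, ← diag r i l j hi hj]
  · intro exchange
    refine ⟨fun i j l hj => ?_, fun i r j hi => ?_, fun i r j l hi hj => ?_,
      fun i r j l hi hj => ?_⟩
    · simpa [hj.ne', hj.not_gt, eq_comm] using exchange i i l j
    · simpa [hi.ne, hi.not_gt] using exchange i r j j
    · simpa [hi.ne, hi.not_gt, hj.ne', hj.not_gt] using exchange i r l j
    · have h := exchange i r j l
      have h' := exchange i r l j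
      simp only [hi.ne, hi.not_gt, hj.ne, hj.ne', hj, hj.not_gt, if_true, if_false, one_smul,
        zero_smul, add_zero] at h h'
      rw [h, h', add_sub_cancel_left]

theorem IsQMat.map {A A' : Type*} [Ring A] [Algebra k A] [Ring A'] [Algebra k A']
    {X : Fin m → Fin n → A} (hX : IsQMat q X) (F : A →ₐ[k] A') :
    IsQMat q fun i j => F (X i j) := by
  obtain ⟨row, col, anti, diag⟩ := hX
  refine ⟨fun i j l hj => ?_, fun i r j hi => ?_, fun i r j l hi hj => ?_,
    fun i r j l hi hj => ?_⟩
  · simp only [← map_mul, ← map_smul, row i j l hj]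
  · simp only [← map_mul, ← map_smul, col i r j hi]
  · simp only [← map_mul, anti i r j l hi hj]
  · simp only [← map_mul, ← map_sub, ← map_smul, diag i r j l hi hj]

theorem IsQMat.mul_of_commute {A : Type*} [Ring A] [Algebra k A] (hq : q ≠ 0) {p : ℕ}
    {P : Fin m → Fin p → A} {Q : Fin p → Fin n → A} (hP : IsQMat q P) (hQ : IsQMat q Q)
    (hPQ : ∀ i a b j, Commute (P i a) (Q b j)) :
    IsQMat q fun i j => ∑ a, P i a * Q a j := by
  rw [isQMat_iff_exchange hq] at hP hQ ⊢
  have product (i r : Fin m) (j l : Fin n) :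
      (∑ a, P i a * Q a j) * ∑ b, P r b * Q b l =
        ∑ a, ∑ b, P i a * P r b * (Q a j * Q b l) := by
    simp only [Finset.sum_mul_sum, (hPQ _ _ _ _).symm.mul_mul_mul_comm]
  intro i r j l
  calc
    _ = ∑ a, ∑ b, ((if i = r then q else 1) • (P i a * P r b) +
          (if r < i then q - q⁻¹ else 0) • (P r a * P i b)) * (Q a j * Q b l) := by
      simp only [product, Finset.smul_sum, ← Finset.sum_add_distrib, add_mul, smul_mul_assoc]
    _ = ∑ a, ∑ b, (P r b * P i a * ((if a = b then q else 1) • (Q a j * Q b l)) +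
          P r a * P i b * ((if a < b then q - q⁻¹ else 0) • (Q a j * Q b l))) := by
      simp only [hP, add_mul, smul_mul_assoc, mul_smul_comm]
    _ = ∑ a, ∑ b, P r b * P i a * ((if a = b then q else 1) • (Q a j * Q b l) +
          (if b < a then q - q⁻¹ else 0) • (Q b j * Q a l)) := by
      simp only [mul_add, Finset.sum_add_distrib]
      congr 1
      exact Finset.sum_comm
    _ = ∑ b, ∑ a, P r b * P i a * ((if j = l then q else 1) • (Q b l * Q a j) +
          (if j < l then q - q⁻¹ else 0) • (Q b j * Q a l)) := by
      simp only [hQ]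
      exact Finset.sum_comm
    _ = _ := by
      simp only [product, Finset.smul_sum, ← Finset.sum_add_distrib, mul_add, mul_smul_comm]

theorem IsQMat.commute_corner_minor {A : Type*} [Ring A] [Algebra k A] (hq : q ≠ 0)
    {X : Fin m → Fin n → A} (hX : IsQMat q X) {i r : Fin m} {j l : Fin n} (hi : i < r)
    (hj : j < l) :
    Commute (X i l) (X r j * X i l - q⁻¹ • (X i j * X r l)) := by
  obtain ⟨row, col, anti, -⟩ := hX
  refine .sub_right (.mul_right (anti i r j l hi hj) (.refl _)) (.smul_right ?_ _)
  calc X i l * (X i j * X r l)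
      = q⁻¹ • (X i j * X i l * X r l) := by
        rw [row i j l hj, smul_mul_assoc, inv_smul_smul₀ hq, mul_assoc]
    _ = X i j * X r l * X i l := by
        rw [mul_assoc, col i r l hi, mul_smul_comm, inv_smul_smul₀ hq, mul_assoc]

/-- The matrix over `Mat_m(k)` through which `O_q(M_{m,m})` acts on `k^m`; its entries are the
blocks of the `R`-matrix. -/
def rMatrix (q : k) (m : ℕ) (r a : Fin m) : Matrix (Fin m) (Fin m) k :=
  if a = r then Matrix.diagonal (Pi.mulSingle r q⁻¹)
  else if r < a then Matrix.single a r (q⁻¹ - q) else 0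

theorem rMatrix_self (m : ℕ) (r : Fin m) :
    rMatrix q m r r = Matrix.diagonal (Pi.mulSingle r q⁻¹) := if_pos rfl

theorem rMatrix_of_lt {r a : Fin m} (h : r < a) :
    rMatrix q m r a = Matrix.single a r (q⁻¹ - q) := by
  rw [rMatrix, if_neg h.ne', if_pos h]

theorem rMatrix_of_gt {r a : Fin m} (h : a < r) : rMatrix q m r a = 0 := by
  rw [rMatrix, if_neg h.ne, if_neg h.not_gt]

theorem rMatrix_apply (r a i c : Fin m) :
    rMatrix q m r a i c =
      (if a = r then if c = i then if i = r then q⁻¹ else 1 else 0 else 0) +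
        if a = i then if c = r then if r < i then q⁻¹ - q else 0 else 0 else 0 := by
  rcases lt_trichotomy r a with h | rfl | h
  · simp only [rMatrix_of_lt h, Matrix.single_apply, h.ne', if_false, zero_add]
    split_ifs <;> grind
  · simp only [rMatrix_self, Matrix.diagonal_apply, Pi.mulSingle_apply]
    split_ifs <;> grind
  · simp only [rMatrix_of_gt h, h.ne, Matrix.zero_apply, if_false, zero_add]
    split_ifs <;> grind

theorem diagonal_mul_single {ι R : Type*} [Fintype ι] [DecidableEq ι]
    [NonUnitalNonAssocSemiring R] (d : ι → R) (a b : ι) (c : R) :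
    Matrix.diagonal d * Matrix.single a b c = Matrix.single a b (d a * c) := by
  ext i j
  simp +contextual [Matrix.single_apply, ite_and]

theorem single_mul_diagonal {ι R : Type*} [Fintype ι] [DecidableEq ι]
    [NonUnitalNonAssocSemiring R] (d : ι → R) (a b : ι) (c : R) :
    Matrix.single a b c * Matrix.diagonal d = Matrix.single a b (c * d b) := by
  ext i j
  simp +contextual [Matrix.single_apply, ite_and]

theorem isQMat_rMatrix (hq : q ≠ 0) (m : ℕ) : IsQMat q (rMatrix q m) := by
  refine ⟨fun i j l hj => ?_, fun i r j hi => ?_, fun i r j l hi hj => ?_,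
    fun i r j l hi hj => ?_⟩
  · rcases lt_trichotomy i j with h | rfl | h
    · simp [rMatrix_of_lt h, rMatrix_of_lt (h.trans hj), h.ne, (h.trans hj).ne]
    · simp [rMatrix_self, rMatrix_of_lt hj, hj.ne', hq, diagonal_mul_single,
        single_mul_diagonal, mul_comm]
    · simp [rMatrix_of_gt h]
  · rcases lt_trichotomy r j with h | rfl | h
    · simp [rMatrix_of_lt h, rMatrix_of_lt (hi.trans h), h.ne, (hi.trans h).ne]
    · simp [rMatrix_self, rMatrix_of_lt hi, hi.ne, hq, diagonal_mul_single, single_mul_diagonal]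
    · simp [rMatrix_of_gt h]
  · rcases lt_trichotomy r j with h | rfl | h
    · simp [rMatrix_of_lt h, rMatrix_of_lt (hi.trans (h.trans hj)), (h.trans hj).ne,
        (hi.trans h).ne]
    · simp [rMatrix_self, rMatrix_of_lt (hi.trans hj), hi.ne, hj.ne', diagonal_mul_single,
        single_mul_diagonal]
    · simp [rMatrix_of_gt h]
  · rcases lt_trichotomy i j with h | rfl | h
    · rcases lt_trichotomy r l with h' | rfl | h'
      · rw [rMatrix_of_lt h, rMatrix_of_lt h', rMatrix_of_lt (h.trans hj)]
        rcases lt_trichotomy r j with h'' | rfl | h''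
        · simp [rMatrix_of_lt h'', (h.trans hj).ne, h''.ne, h.ne]
        · simp [rMatrix_self, hi.ne, (h.trans hj).ne, single_mul_diagonal, Matrix.smul_single,
            Matrix.single_neg, ← neg_mul]
        · simp [rMatrix_of_gt h'', h''.ne', (hi.trans h').ne]
      · simp [rMatrix_of_lt h, rMatrix_of_gt hj, rMatrix_self, hi.ne, hj.ne, diagonal_mul_single,
          single_mul_diagonal]
      · simp [rMatrix_of_gt h', rMatrix_of_gt (hj.trans h')]
    · rcases lt_trichotomy r l with h' | rfl | h'
      · simp [rMatrix_of_lt h', rMatrix_of_gt hi, rMatrix_self, hi.ne', hj.ne', diagonal_mul_single,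
          single_mul_diagonal]
      · simp [rMatrix_of_gt hi, rMatrix_self, mul_comm]
      · simp [rMatrix_of_gt h', rMatrix_of_gt hi]
    · simp [rMatrix_of_gt h, rMatrix_of_gt (h.trans hi)]

namespace OqM

theorem isQMat_qX (q : k) (m n : ℕ) : IsQMat q (qX k q m n) := by
  refine ⟨fun i j l hj => ?_, fun i r j hi => ?_, fun i r j l hi hj => ?_,
    fun i r j l hi hj => ?_⟩
  · simpa only [qX, map_mul, map_smul] using RingQuot.mkAlgHom_rel k (QMRel.row (q := q) i j l hj)
  · simpa only [qX, map_mul, map_smul] using RingQuot.mkAlgHom_rel k (QMRel.col (q := q) i r j hi)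
  · simpa only [qX, map_mul] using RingQuot.mkAlgHom_rel k (QMRel.anti (q := q) i r j l hi hj)
  · rw [sub_eq_iff_eq_add']
    simpa only [qX, map_mul, map_add, map_smul] using
      RingQuot.mkAlgHom_rel k (QMRel.diag (q := q) i r j l hi hj)

/-- The algebra homomorphism `O_q(M_{m,n}) → A` sending the generators to the entries of a given
`q`-quantum matrix over `A`. -/
def lift {A : Type*} [Ring A] [Algebra k A] {X : Fin m → Fin n → A} (hX : IsQMat q X) :
    OqM k q m n →ₐ[k] A :=
  RingQuot.liftAlgHom k ⟨FreeAlgebra.lift k fun p => X p.1 p.2, fun _ _ h => by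
    obtain ⟨row, col, anti, diag⟩ := hX
    cases h with
    | row i j l hj => simpa using row i j l hj
    | col i r j hi => simpa using col i r j hi
    | anti i r j l hi hj => simpa using anti i r j l hi hj
    | diag i r j l hi hj => simpa [sub_eq_iff_eq_add'] using diag i r j l hi hj⟩

@[simp]
theorem lift_qX {A : Type*} [Ring A] [Algebra k A] {X : Fin m → Fin n → A}
    (hX : IsQMat q X) (i : Fin m) (j : Fin n) : lift hX (qX k q m n i j) = X i j := by
  simp [lift, qX]

@[elab_as_elim]
theorem induction {P : OqM k q m n → Prop} (one : P 1)
    (add : ∀ x y, P x → P y → P (x + y)) (smul : ∀ (c : k) x, P x → P (c • x))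
    (qX_mul : ∀ i j x, P x → P (qX k q m n i j * x)) (x : OqM k q m n) : P x := by
  obtain ⟨y, rfl⟩ := RingQuot.mkAlgHom_surjective k (QMRel k q m n) x
  suffices h : ∀ x, P x → P (RingQuot.mkAlgHom k (QMRel k q m n) y * x) by
    simpa only [mul_one] using h 1 one
  induction y using FreeAlgebra.induction with
  | grade0 c =>
    intro x hx
    rw [AlgHom.commutes, ← Algebra.smul_def]
    exact smul c x hx
  | grade1 p => exact qX_mul p.1 p.2
  | mul a b ha hb =>
    intro x hx
    rw [map_mul, mul_assoc]
    exact ha _ (hb x hx)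
  | add a b ha hb =>
    intro x hx
    rw [map_add, add_mul]
    exact add _ _ (ha x hx) (hb x hx)

theorem isQMat_succRow (q : k) (m n : ℕ) :
    IsQMat q fun (i : Fin m) (j : Fin n) => qX k q (m + 1) n i.succ j := by
  obtain ⟨row, col, anti, diag⟩ := isQMat_qX q (m + 1) n
  exact ⟨fun i => row i.succ, fun i r j hi => col _ _ j (Fin.succ_lt_succ_iff.2 hi),
    fun i r j l hi => anti _ _ j l (Fin.succ_lt_succ_iff.2 hi),
    fun i r j l hi => diag _ _ j l (Fin.succ_lt_succ_iff.2 hi)⟩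

theorem isQMat_cons_zero (q : k) (m n : ℕ) :
    IsQMat q (Fin.cons 0 (qX k q m n) : Fin (m + 1) → Fin n → OqM k q m n) := by
  obtain ⟨row, col, anti, diag⟩ := isQMat_qX q m n
  refine ⟨fun i => ?_, fun i r j hi => ?_, fun i r j l hi => ?_, fun i r j l hi => ?_⟩
  · cases i using Fin.cases with
    | zero => simp
    | succ i => simpa using row i
  all_goals
    obtain ⟨r, rfl⟩ := Fin.exists_succ_eq.2 (Fin.ne_zero_of_lt hi)
    cases i using Fin.cases with
    | zero => simp
    | succ i => ?_
  · simpa using col i r j (Fin.succ_lt_succ_iff.1 hi)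
  · simpa using anti i r j l (Fin.succ_lt_succ_iff.1 hi)
  · simpa using diag i r j l (Fin.succ_lt_succ_iff.1 hi)

/-- The embedding `O_q(M_{m,n}) → O_q(M_{m+1,n})` onto the subalgebra generated by the last `m`
rows. -/
def succRow (q : k) (m n : ℕ) : OqM k q m n →ₐ[k] OqM k q (m + 1) n :=
  lift (isQMat_succRow q m n)

@[simp]
theorem succRow_qX (i : Fin m) (j : Fin n) :
    succRow q m n (qX k q m n i j) = qX k q (m + 1) n i.succ j :=
  lift_qX _ i j

theorem succRow_injective (q : k) (m n : ℕ) : Function.Injective (succRow q m n) := by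
  have retraction : Function.LeftInverse (lift (isQMat_cons_zero q m n))
      (succRow q m n) := by
    intro x
    induction x using OqM.induction with
    | one => simp only [map_one]
    | add x y hx hy => rw [map_add, map_add, hx, hy]
    | smul c x hx => rw [map_smul, map_smul, hx]
    | qX_mul i j x hx =>
      rw [map_mul, map_mul, hx, succRow_qX, lift_qX, Fin.cons_succ]
  exact retraction.injective

/-- The algebra homomorphism `X_{rl} ↦ ∑_a R_{ra} ⊗ X_{al}` from `O_q(M_{m,n})` to `m × m` matrices
over it, where `R` is `rMatrix q m`. -/
def coaction (hq : q ≠ 0) (m n : ℕ) :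
    OqM k q m n →ₐ[k] Matrix (Fin m) (Fin m) (OqM k q m n) :=
  lift (((isQMat_rMatrix hq m).map (Algebra.ofId k _).mapMatrix).mul_of_commute hq
    ((isQMat_qX q m n).map (Matrix.scalarAlgHom (Fin m) k)) fun _ _ _ _ =>
      (Matrix.scalar_commute_iff.2 (by ext; simp [Algebra.commutes])).symm)

theorem coaction_qX_mul_apply (hq : q ≠ 0) (r : Fin m) (l : Fin n) (f : OqM k q m n)
    (i b : Fin m) :
    coaction hq m n (qX k q m n r l * f) i b =
      (if i = r then q⁻¹ else 1) • (qX k q m n r l * coaction hq m n f i b) +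
        (if r < i then q⁻¹ - q else 0) • (qX k q m n i l * coaction hq m n f r b) := by
  calc
    _ = ∑ a, ∑ c, rMatrix q m r a i c • (qX k q m n a l * coaction hq m n f c b) := by
      rw [map_mul, Finset.sum_comm]
      nth_rw 1 [coaction]
      simp [Finset.sum_mul, Matrix.sum_apply, Matrix.mul_apply, Matrix.diagonal_apply,
        Algebra.smul_def, Algebra.ofId_apply, mul_assoc]
    _ = _ := by
      simp only [rMatrix_apply, add_smul, ite_smul, zero_smul, Finset.sum_add_distrib,
        Finset.sum_ite_irrel, Finset.sum_ite_eq', Finset.sum_const_zero, Finset.mem_univ, if_true]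

/-- The action of `X_{i,n+1}` on the quotient of `O_q(M_{m+1,n+1})` by the left ideal generated by
`X_{1,n+1} - 1` and the `X_{i,n+1}` with `i > 1`, identified with `O_q(M_{m+1,n})`. -/
def lastCol (hq : q ≠ 0) (m n : ℕ) (i : Fin (m + 1)) : Module.End k (OqM k q (m + 1) n) :=
  Matrix.entryLinearMap k _ i 0 ∘ₗ (coaction hq (m + 1) n).toLinearMap

theorem lastCol_zero_one (hq : q ≠ 0) : lastCol hq m n 0 1 = 1 := by
  simp [lastCol]

theorem lastCol_succ_one (hq : q ≠ 0) (i : Fin m) :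
    lastCol hq m n i.succ 1 = 0 := by
  simp [lastCol]

theorem lastCol_qX_mul (hq : q ≠ 0) (i r : Fin (m + 1)) (l : Fin n)
    (f : OqM k q (m + 1) n) :
    lastCol hq m n i (qX k q (m + 1) n r l * f) =
      (if i = r then q⁻¹ else 1) • (qX k q (m + 1) n r l * lastCol hq m n i f) +
        (if r < i then q⁻¹ - q else 0) • (qX k q (m + 1) n i l * lastCol hq m n r f) :=
  coaction_qX_mul_apply hq r l f i 0

theorem lastCol_qX_mul_self (hq : q ≠ 0) (i : Fin (m + 1)) (l : Fin n)
    (f : OqM k q (m + 1) n) :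
    lastCol hq m n i (qX k q (m + 1) n i l * f) =
      q⁻¹ • (qX k q (m + 1) n i l * lastCol hq m n i f) := by
  simp [lastCol_qX_mul]

theorem lastCol_qX_mul_of_lt (hq : q ≠ 0) {i r : Fin (m + 1)} (hi : i < r) (l : Fin n)
    (f : OqM k q (m + 1) n) :
    lastCol hq m n i (qX k q (m + 1) n r l * f) =
      qX k q (m + 1) n r l * lastCol hq m n i f := by
  simp [lastCol_qX_mul, hi.ne, hi.not_gt]

theorem lastCol_qX_mul_of_gt (hq : q ≠ 0) {i r : Fin (m + 1)} (hi : r < i) (l : Fin n)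
    (f : OqM k q (m + 1) n) :
    lastCol hq m n i (qX k q (m + 1) n r l * f) =
      qX k q (m + 1) n r l * lastCol hq m n i f +
        (q⁻¹ - q) • (qX k q (m + 1) n i l * lastCol hq m n r f) := by
  simp [lastCol_qX_mul, hi.ne', hi]

theorem lastCol_lastCol (hq : q ≠ 0) {i r : Fin (m + 1)} (hi : i < r)
    (f : OqM k q (m + 1) n) :
    lastCol hq m n i (lastCol hq m n r f) =
      q • lastCol hq m n r (lastCol hq m n i f) := by
  induction f using OqM.induction generalizing i r with
  | one =>
    obtain ⟨r, rfl⟩ := Fin.exists_succ_eq.2 (Fin.ne_zero_of_lt hi)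
    cases i using Fin.cases with
    | zero => simp [lastCol_zero_one, lastCol_succ_one]
    | succ i => simp [lastCol_succ_one]
  | add x y hx hy => simp only [map_add, hx hi, hy hi, smul_add]
  | smul c x hx => simp only [map_smul, hx hi, smul_comm c q]
  | qX_mul s l x hx =>
    rcases lt_trichotomy s i with hs | rfl | hs
    · simp only [lastCol_qX_mul_of_gt hq hs, lastCol_qX_mul_of_gt hq (hs.trans hi),
        lastCol_qX_mul_of_gt hq hi, lastCol_qX_mul_of_lt hq hi,
        map_add, map_smul, hx hi, hx hs, hx (hs.trans hi), mul_smul_comm]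
      match_scalars
      all_goals field_simp
      ring
    · simp only [lastCol_qX_mul_of_gt hq hi, lastCol_qX_mul_self,
        lastCol_qX_mul_of_lt hq hi, map_add, map_smul, hx hi, mul_smul_comm]
      match_scalars <;> field_simp
    · rcases lt_trichotomy s r with hr | rfl | hr
      · simp only [lastCol_qX_mul_of_lt hq hs, lastCol_qX_mul_of_gt hq hr,
          lastCol_qX_mul_of_lt hq hi, map_add, map_smul, hx hi, hx hs, mul_smul_comm]
        match_scalars <;> field_simp
      · simp only [lastCol_qX_mul_of_lt hq hi, lastCol_qX_mul_self, map_smul, hx hi,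
          mul_smul_comm, smul_comm q]
      · simp only [lastCol_qX_mul_of_lt hq hs, lastCol_qX_mul_of_lt hq hr, hx hi,
          mul_smul_comm]

/-- The matrix of operators on `O_q(M_{m+1,n})` giving the action of the generators of
`O_q(M_{m+1,n+1})`: left multiplications in the first `n` columns and `OqM.lastCol` in the last. -/
def actionMatrix (hq : q ≠ 0) (m n : ℕ) (i : Fin (m + 1)) :
    Fin (n + 1) → Module.End k (OqM k q (m + 1) n) :=
  Fin.snoc (fun j => Algebra.lmul k _ (qX k q (m + 1) n i j)) (lastCol hq m n i)

theorem isQMat_actionMatrix (hq : q ≠ 0) (m n : ℕ) :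
    IsQMat q (actionMatrix (k := k) hq m n) := by
  obtain ⟨row, col, anti, diag⟩ := (isQMat_qX q (m + 1) n).map
    (A' := Module.End k (OqM k q (m + 1) n)) (Algebra.lmul k _)
  refine ⟨fun i j l hj => ?_, fun i r j hi => ?_, fun i r j l hi hj => ?_,
    fun i r j l hi hj => ?_⟩
  · obtain ⟨j, rfl⟩ := Fin.exists_castSucc_eq.2 (Fin.ne_last_of_lt hj)
    cases l using Fin.lastCases with
    | last =>
      ext f
      simp [actionMatrix, lastCol_qX_mul_self, hq]
    | cast l => simpa [actionMatrix] using row i j l (by simpa using hj)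
  · cases j using Fin.lastCases with
    | last =>
      ext f
      simpa [actionMatrix] using lastCol_lastCol hq hi f
    | cast j => simpa [actionMatrix] using col i r j hi
  · obtain ⟨j, rfl⟩ := Fin.exists_castSucc_eq.2 (Fin.ne_last_of_lt hj)
    cases l using Fin.lastCases with
    | last =>
      ext f
      simp [actionMatrix, lastCol_qX_mul_of_lt hq hi]
    | cast l => simpa [actionMatrix] using anti i r j l hi (by simpa using hj)
  · obtain ⟨j, rfl⟩ := Fin.exists_castSucc_eq.2 (Fin.ne_last_of_lt hj)
    cases l using Fin.lastCases with
    | last =>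
      ext f
      simp only [actionMatrix, Algebra.coe_lmul_eq_mul, Fin.snoc_castSucc, Fin.snoc_last,
        LinearMap.sub_apply, Module.End.mul_apply, LinearMap.mul_apply_apply,
        lastCol_qX_mul_of_gt hq hi, sub_add_cancel_left, LinearMap.smul_apply,
        lastCol_qX_mul_of_lt hq hi]
      module
    | cast l => simpa [actionMatrix] using diag i r j l hi (by simpa using hj)

/-- The action of `O_q(M_{m+1,n+1})` on its quotient by the left ideal generated by
`X_{1,n+1} - 1` and the `X_{i,n+1}` with `i > 1`, identified with `O_q(M_{m+1,n})`. -/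
def action (hq : q ≠ 0) (m n : ℕ) :
    OqM k q (m + 1) (n + 1) →ₐ[k] Module.End k (OqM k q (m + 1) n) :=
  lift (isQMat_actionMatrix hq m n)

theorem action_qX_castSucc (hq : q ≠ 0) (i : Fin (m + 1)) (j : Fin n)
    (f : OqM k q (m + 1) n) :
    action hq m n (qX k q (m + 1) (n + 1) i j.castSucc) f = qX k q (m + 1) n i j * f := by
  simp [action, actionMatrix]

theorem action_qX_last (hq : q ≠ 0) (i : Fin (m + 1)) :
    action hq m n (qX k q (m + 1) (n + 1) i (Fin.last n)) = lastCol hq m n i := by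
  simp [action, actionMatrix]

theorem lastCol_zero_succRow (hq : q ≠ 0) (y : OqM k q m n) :
    lastCol hq m n 0 (succRow q m n y) = succRow q m n y := by
  induction y using OqM.induction with
  | one => simp [lastCol_zero_one]
  | add x y hx hy => simp only [map_add, hx, hy]
  | smul c x hx => simp only [map_smul, hx]
  | qX_mul i j x hx => simp [lastCol_qX_mul_of_lt, hx]

theorem lastCol_succ_succRow (hq : q ≠ 0) (i : Fin m) (y : OqM k q m n) :
    lastCol hq m n i.succ (succRow q m n y) = 0 := by
  induction y using OqM.induction generalizing i with
  | one => simp [lastCol_succ_one]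
  | add x y hx hy => simp only [map_add, hx, hy, add_zero]
  | smul c x hx => simp only [map_smul, hx, smul_zero]
  | qX_mul r j x hx => simp [lastCol_qX_mul, hx]

/-- The minor `X_{i+1,j} X_{1,n+1} - q⁻¹ X_{1,j} X_{i+1,n+1}` of the generic matrix through the
corner `X_{1,n+1}`; it is `X'_{i+1,j} X_{1,n+1}`. -/
def cornerMinor (q : k) (i : Fin m) (j : Fin n) : OqM k q (m + 1) (n + 1) :=
  qX k q (m + 1) (n + 1) i.succ j.castSucc * qX k q (m + 1) (n + 1) 0 (Fin.last n) -
    q⁻¹ • (qX k q (m + 1) (n + 1) 0 j.castSucc * qX k q (m + 1) (n + 1) i.succ (Fin.last n))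

theorem action_cornerMinor_succRow (hq : q ≠ 0) (i : Fin m) (j : Fin n) (y : OqM k q m n) :
    action hq m n (cornerMinor q i j) (succRow q m n y) =
      succRow q m n (qX k q m n i j * y) := by
  simp [cornerMinor, action_qX_castSucc, action_qX_last, lastCol_zero_succRow,
    lastCol_succ_succRow]

theorem lastCol_zero_pow_succRow (hq : q ≠ 0) (N : ℕ) (y : OqM k q m n) :
    (lastCol hq m n 0 ^ N) (succRow q m n y) = succRow q m n y := by
  rw [Module.End.pow_apply, Function.iterate_fixed (lastCol_zero_succRow hq y)]

theorem commute_corner_cornerMinor (hq : q ≠ 0) (i : Fin m) (j : Fin n) :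
    Commute (qX k q (m + 1) (n + 1) 0 (Fin.last n)) (cornerMinor q i j) :=
  (isQMat_qX q (m + 1) (n + 1)).commute_corner_minor hq i.succ_pos j.castSucc_lt_last

section Localization

variable {B : Type*} [Ring B] [Algebra k B] (φ : OqM k q (m + 1) (n + 1) →ₐ[k] B) {u : B}

theorem corner_mul_Xp (hq : q ≠ 0) (hu : φ (qX k q (m + 1) (n + 1) 0 (Fin.last n)) * u = 1)
    (i : Fin m) (j : Fin n) :
    φ (qX k q (m + 1) (n + 1) 0 (Fin.last n)) *
        Xp q m.succ_pos n.succ_pos φ u i.succ j.castSucc = φ (cornerMinor q i j) := by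
  have hXp : Xp q m.succ_pos n.succ_pos φ u i.succ j.castSucc =
      φ (cornerMinor q i j) * u := by
    rw [cornerMinor, map_sub, sub_mul, map_mul, mul_assoc, hu, mul_one]
    simp [Xp, Fin.last]
  rw [hXp, ← mul_assoc, ((commute_corner_cornerMinor hq i j).map φ).eq, mul_assoc, hu, mul_one]

theorem exists_corner_pow_mul_eq (hq : q ≠ 0)
    (hu : φ (qX k q (m + 1) (n + 1) 0 (Fin.last n)) * u = 1) (ψ : OqM k q m n →ₐ[k] B)
    (hψ : ∀ i j, ψ (qX k q m n i j) = Xp q m.succ_pos n.succ_pos φ u i.succ j.castSucc)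
    (y : OqM k q m n) :
    ∃ (N : ℕ) (a : OqM k q (m + 1) (n + 1)),
      φ (qX k q (m + 1) (n + 1) 0 (Fin.last n)) ^ N * ψ y = φ a ∧
        action hq m n a 1 = succRow q m n y := by
  induction y using OqM.induction with
  | one => exact ⟨0, 1, by simp, by simp⟩
  | add x y hx hy =>
    obtain ⟨M, a, ha, hax⟩ := hx
    obtain ⟨N, b, hb, hby⟩ := hy
    refine ⟨M + N, qX k q (m + 1) (n + 1) 0 (Fin.last n) ^ N * a +
      qX k q (m + 1) (n + 1) 0 (Fin.last n) ^ M * b, ?_, ?_⟩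
    · rw [map_add, mul_add, map_add, map_mul, map_mul, ← ha, ← hb, map_pow, map_pow, ← mul_assoc,
        ← mul_assoc, ← pow_add, ← pow_add, add_comm N M]
    · simp [hax, hby, action_qX_last, lastCol_zero_pow_succRow]
  | smul c x hx =>
    obtain ⟨N, a, ha, hax⟩ := hx
    exact ⟨N, c • a, by rw [map_smul, map_smul, mul_smul_comm, ha], by simp [hax]⟩
  | qX_mul i j x hx =>
    obtain ⟨N, a, ha, hax⟩ := hx
    refine ⟨N + 1, cornerMinor q i j * a, ?_, ?_⟩
    · have hw := ((commute_corner_cornerMinor hq i j).map φ).pow_left N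
      rw [map_mul, hψ, pow_succ, ← mul_assoc, mul_assoc (_ ^ N), corner_mul_Xp φ hq hu, hw.eq,
        mul_assoc, ha, map_mul]
    · rw [map_mul, Module.End.mul_apply, hax, action_cornerMinor_succRow]

end Localization

end OqM

end QuantumMatrices

theorem xprime_is_generic_general {k B : Type*} [Field k] [Ring B] [Algebra k B]
    (q : k) (hq : q ≠ 0) {m n : ℕ} (φ : OqM k q (m + 1) (n + 1) →ₐ[k] B)
    (hφ : Function.Injective φ) (u : B)
    (hu : φ (qX k q (m + 1) (n + 1) 0 (Fin.last n)) * u = 1) (ψ : OqM k q m n →ₐ[k] B)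
    (hψ : ∀ i j, ψ (qX k q m n i j) = Xp q m.succ_pos n.succ_pos φ u i.succ j.castSucc) :
    Function.Injective ψ := by
  refine (injective_iff_map_eq_zero ψ).2 fun y hy => ?_
  obtain ⟨N, a, ha, hay⟩ := OqM.exists_corner_pow_mul_eq φ hq hu ψ hψ y
  have ha0 : a = 0 := hφ (by rw [← ha, hy, mul_zero, map_zero])
  refine OqM.succRow_injective q m n ?_
  rw [← hay, ha0, map_zero, map_zero, LinearMap.zero_apply]

/-- The matrix `X'` is a *generic* `q`-quantum matrix: any algebra homomorphism
`O_q(M_{m-1,n-1}) → O_q(M_{m,n})[X_{1n}⁻¹]` sending the canonical generators to the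
`X'_{ij}` is injective. -/
theorem xprime_is_generic {k B : Type*} [Field k] [Ring B] [Algebra k B]
    (q : k) (hq : q ≠ 0) {m n : ℕ} (hm : 2 ≤ m) (hn : 2 ≤ n)
    (φ : OqM k q m n →ₐ[k] B) (hφ : Function.Injective φ) (u : B)
    (hu1 : φ (qX k q m n ⟨0, by omega⟩ ⟨n - 1, by omega⟩) * u = 1)
    (hu2 : u * φ (qX k q m n ⟨0, by omega⟩ ⟨n - 1, by omega⟩) = 1)
    (hloc : ∀ b : B, ∃ (a : OqM k q m n) (p : ℕ), b = φ a * u ^ p)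
    (ψ : OqM k q (m - 1) (n - 1) →ₐ[k] B)
    (hψ : ∀ (i : Fin (m - 1)) (j : Fin (n - 1)),
      ψ (qX k q (m - 1) (n - 1) i j)
        = Xp q (by omega) (by omega) φ u ⟨(i : ℕ) + 1, by have := i.isLt; omega⟩
            ⟨(j : ℕ), by have := j.isLt; omega⟩) :
    Function.Injective ψ := by
  obtain ⟨m, rfl⟩ : ∃ l, m = l + 1 := ⟨m - 1, by omega⟩
  obtain ⟨n, rfl⟩ : ∃ l, n = l + 1 := ⟨n - 1, by omega⟩
  exact xprime_is_generic_general q hq φ hφ u hu1 ψ hψ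
end
end

section
/- For 1 ≤ t ≤ min{m,n}, the two-sided ideal I_t(X) of O_q(M_{m,n}) generated by all t×t quantum minors coincides with the right ideal of O_q(M_{m,n}) generated by the t×t quantum minors. -/
noncomputable section
open scoped BigOperators

/-!
A Hecke generator acts on functions of words by mixing two adjacent letters. In `R`-matrix form,
the defining relations of a quantum matrix `X` say that `f ↦ (I ↦ ∑ J, f J X_{I,J})` commutes with
these actions. It therefore sends `q`-alternating functions to `q`-alternating functions, whose
values are determined by those at increasing words; at increasing words the values are
combinations of quantum minors.

The product `X_{rc} [I|J]` is the value of this map at the function of words of length `t + 1`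
obtained by prepending the letter `c` to the antisymmetrizer of `J`. That function alternates in
the last `t` positions. By the braid relations, `T_{t-1} ⋯ T_0` turns it into a function that
alternates in the first `t` positions, and the values of the latter lie in `∑ [K|L] X_{sd}`.
Since each `T_i` is invertible and the `T_i` and their inverses preserve the functions with values
in a given subspace, `X_{rc} [I|J]` itself lies in the right ideal generated by the minors.
-/

namespace QuantumMatrix

section Words

variable {k : Type*} [Field k] {ι κ α β M M' : Type*}

lemma comp_swap_comp_swap [DecidableEq ι] (a b : ι) (I : ι → α) :
    (I ∘ Equiv.swap a b) ∘ Equiv.swap a b = I := by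
  ext; simp

lemma comp_swap_eq_self [DecidableEq ι] {a b : ι} {I : ι → α} (h : I a = I b) :
    I ∘ Equiv.swap a b = I := by
  simp [Equiv.comp_swap_eq_update, h]

/-- The diagonal coefficient of the type `A` `R`-matrix at a pair of letters `(x, y)`; the
off-diagonal part is the flip. Equal letters get `q - 1`, so that with the flip they contribute
the eigenvalue `q`. -/
def exchangeCoeff [LinearOrder α] (q : k) (x y : α) : k :=
  if x = y then q - 1 else if x < y then q - q⁻¹ else 0

lemma exchangeCoeff_self [LinearOrder α] (q : k) (x : α) : exchangeCoeff q x x = q - 1 := by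
  simp [exchangeCoeff]

lemma exchangeCoeff_of_lt [LinearOrder α] (q : k) {x y : α} (h : x < y) :
    exchangeCoeff q x y = q - q⁻¹ := by
  simp [exchangeCoeff, h, h.ne]

lemma exchangeCoeff_of_gt [LinearOrder α] (q : k) {x y : α} (h : y < x) :
    exchangeCoeff q x y = 0 := by
  simp [exchangeCoeff, h.ne', h.not_gt]

variable [AddCommGroup M] [Module k M] [AddCommGroup M'] [Module k M']

section HeckeOp

variable [LinearOrder α] [LinearOrder β] [DecidableEq ι] [DecidableEq κ]

/-- The Hecke algebra generator acting on functions of words `I : ι → α` by mixing the letters in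
positions `a` and `b`. It is normalised to have eigenvalues `q` and `-q⁻¹`. -/
def heckeOp (q : k) (a b : ι) : Module.End k ((ι → α) → M) where
  toFun f I := exchangeCoeff q (I a) (I b) • f I + f (I ∘ Equiv.swap a b)
  map_add' f g := by ext I; simp only [Pi.add_apply]; module
  map_smul' c f := by ext I; simp only [Pi.smul_apply, RingHom.id_apply]; module

lemma heckeOp_apply (q : k) (a b : ι) (f : (ι → α) → M) (I : ι → α) :
    heckeOp q a b f I = exchangeCoeff q (I a) (I b) • f I + f (I ∘ Equiv.swap a b) :=
  rfl

lemma heckeOp_mul_self {q : k} (hq : q ≠ 0) (a b : ι) :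
    (heckeOp q a b * heckeOp q a b : Module.End k ((ι → α) → M)) =
      (q - q⁻¹) • heckeOp q a b + 1 := by
  ext f I
  simp only [Module.End.mul_apply, Module.End.one_apply, LinearMap.add_apply,
    LinearMap.smul_apply, Pi.add_apply, Pi.smul_apply, heckeOp_apply, comp_swap_comp_swap,
    Function.comp_apply, Equiv.swap_apply_left, Equiv.swap_apply_right]
  rcases lt_trichotomy (I a) (I b) with h | h | h
  · simp only [exchangeCoeff_of_lt q h, exchangeCoeff_of_gt q h]
    module
  · rw [comp_swap_eq_self h, h, exchangeCoeff_self]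
    match_scalars
    field_simp
    ring
  · simp only [exchangeCoeff_of_lt q h, exchangeCoeff_of_gt q h]
    module

lemma heckeOp_commute (q : k) {a b c d : ι} (hac : a ≠ c) (had : a ≠ d) (hbc : b ≠ c)
    (hbd : b ≠ d) : Commute (heckeOp q a b : Module.End k ((ι → α) → M)) (heckeOp q c d) := by
  have hswap : Equiv.swap a b * Equiv.swap c d = Equiv.swap c d * Equiv.swap a b :=
    Equiv.Perm.Disjoint.commute fun i => by grind
  ext f I
  have hI : (I ∘ Equiv.swap a b) ∘ Equiv.swap c d = (I ∘ Equiv.swap c d) ∘ Equiv.swap a b :=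
    congrArg (fun σ : Equiv.Perm ι => I ∘ σ) hswap
  simp only [Module.End.mul_apply, heckeOp_apply, hI, Function.comp_apply,
    Equiv.swap_apply_of_ne_of_ne hac had, Equiv.swap_apply_of_ne_of_ne hbc hbd,
    Equiv.swap_apply_of_ne_of_ne hac.symm hbc.symm, Equiv.swap_apply_of_ne_of_ne had.symm hbd.symm]
  module

lemma exchange_braid {q : k} (hq : q ≠ 0) {σ τ : (α → α → α → M) → α → α → α → M}
    (hσ : ∀ F x y z, σ F x y z = exchangeCoeff q x y • F x y z + F y x z)
    (hτ : ∀ F x y z, τ F x y z = exchangeCoeff q y z • F x y z + F x z y)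
    (F : α → α → α → M) (x y z : α) : σ (τ (σ F)) x y z = τ (σ (τ F)) x y z := by
  simp only [hσ, hτ]
  rcases lt_trichotomy x y with hxy | hxy | hxy <;>
    rcases lt_trichotomy y z with hyz | hyz | hyz <;>
    rcases lt_trichotomy x z with hxz | hxz | hxz <;>
    first
    | order
    | subst_vars
      simp only [exchangeCoeff_self, exchangeCoeff_of_lt q, exchangeCoeff_of_gt q, *]
      try (match_scalars <;> field_simp <;> ring)

lemma heckeOp_braid {q : k} (hq : q ≠ 0) {a b c : ι} (hab : a ≠ b) (hac : a ≠ c) (hbc : b ≠ c) :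
    (heckeOp q a b * heckeOp q b c * heckeOp q a b : Module.End k ((ι → α) → M)) =
      heckeOp q b c * heckeOp q a b * heckeOp q b c := by
  ext f I
  let word (x y z : α) : ι → α := Function.update (Function.update (Function.update I a x) b y) c z
  have word_comp_swap_ab (x y z) : word x y z ∘ Equiv.swap a b = word y x z := by
    ext i
    simp only [word, Function.comp_apply, Function.update_apply, Equiv.swap_apply_def]
    grind
  have word_comp_swap_bc (x y z) : word x y z ∘ Equiv.swap b c = word x z y := by
    ext i
    simp only [word, Function.comp_apply, Function.update_apply, Equiv.swap_apply_def]
    grind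
  have word_a (x y z) : word x y z a = x := by simp [word, hab, hac]
  have word_b (x y z) : word x y z b = y := by simp [word, hbc]
  have word_c (x y z) : word x y z c = z := by simp [word]
  have hI : I = word (I a) (I b) (I c) := by simp [word]
  have hmain := exchange_braid hq (σ := fun F x y z => exchangeCoeff q x y • F x y z + F y x z)
    (τ := fun F x y z => exchangeCoeff q y z • F x y z + F x z y) (fun _ _ _ _ => rfl)
    (fun _ _ _ _ => rfl) (fun x y z => f (word x y z)) (I a) (I b) (I c)
  rw [hI]
  simpa only [Module.End.mul_apply, heckeOp_apply, word_comp_swap_ab, word_comp_swap_bc, word_a,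
    word_b, word_c] using hmain

lemma heckeOp_apply_mem (q : k) (a b : ι) (S : Submodule k M) {f : (ι → α) → M}
    (hf : ∀ I, f I ∈ S) (I : ι → α) : heckeOp q a b f I ∈ S :=
  S.add_mem (S.smul_mem _ (hf I)) (hf _)

lemma apply_mem_of_heckeOp_apply_mem {q : k} (hq : q ≠ 0) (a b : ι) (S : Submodule k M)
    {f : (ι → α) → M} (hf : ∀ I, heckeOp q a b f I ∈ S) (I : ι → α) : f I ∈ S := by
  have hquad : f = heckeOp q a b (heckeOp q a b f) - (q - q⁻¹) • heckeOp q a b f :=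
    eq_sub_of_add_eq' (LinearMap.congr_fun (heckeOp_mul_self hq a b) f).symm
  rw [hquad]
  exact S.sub_mem (heckeOp_apply_mem q a b S hf I) (S.smul_mem _ (hf I))

/-- The functions of words that are `q`-alternating in positions `a` and `b`, as in the quantum
exterior algebra. It is the image of `T - q`, and not the kernel of `T + q⁻¹`, because the latter
is larger when `q ^ 2 = -1`. -/
def pairAlternating (q : k) (a b : ι) : Submodule k ((ι → α) → M) :=
  LinearMap.range (heckeOp q a b - q • 1)

lemma mem_pairAlternating_iff {q : k} (hq : q ≠ 0) {a b : ι} {f : (ι → α) → M} :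
    f ∈ pairAlternating q a b ↔
      (∀ I, I a = I b → f I = 0) ∧ ∀ I, I a < I b → f (I ∘ Equiv.swap a b) = (-q) • f I := by
  constructor
  · rintro ⟨g, rfl⟩
    constructor <;> intro I h <;>
      simp only [LinearMap.sub_apply, LinearMap.smul_apply, Module.End.one_apply, Pi.sub_apply,
        Pi.smul_apply, heckeOp_apply, comp_swap_comp_swap, Function.comp_apply,
        Equiv.swap_apply_left, Equiv.swap_apply_right]
    · rw [comp_swap_eq_self h, h, exchangeCoeff_self]
      module
    · rw [exchangeCoeff_of_lt q h, exchangeCoeff_of_gt q h]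
      match_scalars <;> field_simp <;> ring
  · rintro ⟨hzero, hswap⟩
    refine ⟨fun I => if I a < I b then (-q) • f I else 0, ?_⟩
    ext I
    simp only [LinearMap.sub_apply, LinearMap.smul_apply, Module.End.one_apply, Pi.sub_apply,
      Pi.smul_apply, heckeOp_apply, Function.comp_apply, Equiv.swap_apply_left,
      Equiv.swap_apply_right]
    rcases lt_trichotomy (I a) (I b) with h | h | h
    · simp only [h, h.not_gt, if_true, if_false, exchangeCoeff_of_lt q h]
      match_scalars
      field_simp
      ring
    · simp [h, hzero I h]
    · have hI := hswap (I ∘ Equiv.swap a b) (by simpa using h)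
      rw [comp_swap_comp_swap] at hI
      simp [h, h.not_gt, hI]

lemma map_mem_pairAlternating {q : k} {a b : ι} {c d : κ}
    (Φ : ((ι → α) → M) →ₗ[k] ((κ → β) → M'))
    (hΦ : ∀ f, Φ (heckeOp q a b f) = heckeOp q c d (Φ f)) {f : (ι → α) → M}
    (hf : f ∈ pairAlternating q a b) : Φ f ∈ pairAlternating q c d := by
  obtain ⟨g, rfl⟩ := hf
  exact ⟨Φ g, by simp [hΦ]⟩

end HeckeOp

section Alternating

variable [LinearOrder ι] [LinearOrder α]

/-- The functions of words that are `q`-alternating in all pairs of adjacent positions: the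
coefficient functions of the quantum exterior power. -/
def qAlternating (q : k) : Submodule k ((ι → α) → M) :=
  ⨅ (a : ι) (b : ι) (_ : a ⋖ b), pairAlternating q a b

lemma mem_qAlternating_iff {q : k} {f : (ι → α) → M} :
    f ∈ qAlternating q ↔ ∀ a b : ι, a ⋖ b → f ∈ pairAlternating q a b := by
  simp [qAlternating, Submodule.mem_iInf]

lemma apply_mem_of_forall_strictMono [Finite ι] [LocallyFiniteOrder ι] [WellFoundedLT α] {q : k}
    (hq : q ≠ 0) {f : (ι → α) → M} (hf : f ∈ qAlternating q) (S : Submodule k M)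
    (hS : ∀ I, StrictMono I → f I ∈ S) (I : ι → α) : f I ∈ S := by
  suffices h : ∀ K : Lex (ι → α), f (ofLex K) ∈ S from h (toLex I)
  -- Each exchange of a descent makes the word lexicographically smaller.
  intro K
  induction K using WellFoundedLT.induction with
  | ind K ih =>
  by_cases hK : StrictMono (ofLex K)
  · exact hS _ hK
  · obtain ⟨a, b, hab, hle⟩ : ∃ a b : ι, a ⋖ b ∧ ofLex K b ≤ ofLex K a := by
      simpa [strictMono_iff_forall_covBy] using hK
    obtain ⟨hzero, hswap⟩ := (mem_pairAlternating_iff hq).1 (mem_qAlternating_iff.1 hf a b hab)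
    rcases hle.eq_or_lt with heq | hlt
    · rw [hzero _ heq.symm]
      exact S.zero_mem
    · have hK' := hswap (ofLex K ∘ Equiv.swap a b) (by simpa using hlt)
      rw [comp_swap_comp_swap] at hK'
      rw [hK']
      exact S.smul_mem _ (ih (toLex (ofLex K ∘ Equiv.swap a b)) (Pi.lex_desc hab.le hlt))

end Alternating

end Words

section Rotation

lemma mul_prod_finRange_reverse {G : Type*} [Monoid G] {N : ℕ} (s : Fin (N + 1) → G)
    (hcomm : ∀ i j, i.val + 1 < j.val → Commute (s i) (s j))
    (hbraid : ∀ i : Fin N,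
      s i.castSucc * s i.succ * s i.castSucc = s i.succ * s i.castSucc * s i.succ)
    (i : Fin N) :
    s i.castSucc * ((List.finRange (N + 1)).map s).reverse.prod =
      ((List.finRange (N + 1)).map s).reverse.prod * s i.succ := by
  induction N with
  | zero => exact i.elim0
  | succ N ih =>
    have hsplit (L : ℕ) (s : Fin (L + 1) → G) : ((List.finRange (L + 1)).map s).reverse.prod =
        s (Fin.last L) * ((List.finRange L).map (s ∘ Fin.castSucc)).reverse.prod := by
      simp [List.finRange_succ_last]
    rw [hsplit (N + 1)]
    induction i using Fin.lastCases with
    | last =>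
      have hlast : Commute (s (Fin.last (N + 1)))
          ((List.finRange N).map ((s ∘ Fin.castSucc) ∘ Fin.castSucc)).reverse.prod := by
        refine Commute.list_prod_right _ _ fun g hg => ?_
        obtain ⟨j, rfl⟩ : ∃ j : Fin N, s j.castSucc.castSucc = g := by simpa using hg
        exact (hcomm _ _ (by simp)).symm
      rw [hsplit N, mul_assoc, mul_assoc, Fin.succ_last, ← hlast.eq]
      simp only [← mul_assoc]
      exact congrArg (· * _) (hbraid (Fin.last N))
    | cast i =>
      have hi : Commute (s i.castSucc.castSucc) (s (Fin.last (N + 1))) := hcomm _ _ (by simp)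
      rw [← mul_assoc, hi.eq, mul_assoc, mul_assoc]
      exact congrArg (_ * ·) (ih (s ∘ Fin.castSucc)
        (fun j l hjl => hcomm _ _ hjl) (fun j => hbraid j.castSucc) i)

variable {k : Type*} [Field k] {α M : Type*} [LinearOrder α] [AddCommGroup M] [Module k M]

/-- The product `T_{t-1} ⋯ T_1 T_0` of the Hecke generators `T_i` of the positions `i`, `i + 1`.
Conjugation by it shifts the position of each generator down by one. -/
def cycleOp (q : k) (t : ℕ) : Module.End k ((Fin (t + 1) → α) → M) :=
  ((List.finRange t).map fun i => heckeOp q i.castSucc i.succ).reverse.prod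

lemma exists_castSucc_succ_of_covBy {t : ℕ} {a b : Fin (t + 1)} (hab : a ⋖ b) :
    ∃ i : Fin t, a = i.castSucc ∧ b = i.succ := by
  have hval : a.val + 1 = b.val := Order.covBy_iff_add_one_eq.1 (Fin.covBy_iff.1 hab)
  exact ⟨⟨a, by omega⟩, rfl, Fin.ext hval.symm⟩

lemma cycleOp_heckeOp {q : k} (hq : q ≠ 0) {t : ℕ} {a b : Fin t} (hab : a ⋖ b)
    (f : (Fin (t + 1) → α) → M) :
    cycleOp q t (heckeOp q a.succ b.succ f) =
      heckeOp q a.castSucc b.castSucc (cycleOp q t f) := by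
  obtain _ | t := t
  · exact a.elim0
  obtain ⟨i, rfl, rfl⟩ := exists_castSucc_succ_of_covBy hab
  refine (LinearMap.congr_fun (mul_prod_finRange_reverse
    (fun i : Fin (t + 1) => (heckeOp q i.castSucc i.succ : Module.End k _)) ?_ ?_ i) f).symm
  · intro i j hij
    apply heckeOp_commute <;>
      simp only [ne_eq, Fin.ext_iff, Fin.val_castSucc, Fin.val_succ] <;> omega
  · intro i
    simp only [Fin.succ_castSucc]
    apply heckeOp_braid hq <;>
      simp only [ne_eq, Fin.ext_iff, Fin.val_castSucc, Fin.val_succ] <;> omega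

lemma apply_mem_of_cycleOp_apply_mem {q : k} (hq : q ≠ 0) {t : ℕ} (S : Submodule k M)
    {f : (Fin (t + 1) → α) → M} (hf : ∀ I, cycleOp q t f I ∈ S) (I : Fin (t + 1) → α) :
    f I ∈ S := by
  unfold cycleOp at hf
  rw [← List.map_reverse] at hf
  generalize (List.finRange t).reverse = L at hf
  induction L with
  | nil => exact hf I
  | cons i L ih => exact ih (apply_mem_of_heckeOp_apply_mem hq _ _ S (by simpa using hf))

end Rotation

section Prefix

lemma snoc_comp_swap_castSucc {α : Type*} {t : ℕ} (I : Fin t → α) (c : α) (a b : Fin t) :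
    (Fin.snoc I c : Fin (t + 1) → α) ∘ Equiv.swap a.castSucc b.castSucc =
      Fin.snoc (I ∘ Equiv.swap a b) c := by
  ext i
  induction i using Fin.lastCases with
  | last =>
    simp [Equiv.swap_apply_of_ne_of_ne (Fin.castSucc_lt_last _).ne' (Fin.castSucc_lt_last _).ne']
  | cast i =>
    simp [(Fin.castSucc_injective t).swap_apply]

section

variable {α M : Type*} (R : Type*) [Semiring R] [AddCommMonoid M] [Module R M] {t : ℕ}

/-- Tensoring a function of words on the left with the basis vector of the letter `c`. -/
def prependLetter [DecidableEq α] (c : α) :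
    ((Fin t → α) → M) →ₗ[R] ((Fin (t + 1) → α) → M) where
  toFun f I := if I 0 = c then f (Fin.tail I) else 0
  map_add' f g := by ext I; simp only [Pi.add_apply]; split_ifs <;> simp
  map_smul' r f := by ext I; simp

lemma prependLetter_apply [DecidableEq α] (c : α) (f : (Fin t → α) → M)
    (I : Fin (t + 1) → α) : prependLetter R c f I = if I 0 = c then f (Fin.tail I) else 0 :=
  rfl

/-- Restricting a function of words to the words whose last letter is `c`. -/
def restrictLast (c : α) : ((Fin (t + 1) → α) → M) →ₗ[R] ((Fin t → α) → M) :=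
  LinearMap.funLeft R M fun I => Fin.snoc I c

end

variable {k : Type*} [Field k] {α M : Type*} [LinearOrder α] [AddCommGroup M] [Module k M]

lemma prependLetter_heckeOp (q : k) {t : ℕ} (c : α) (a b : Fin t) (f : (Fin t → α) → M) :
    prependLetter k c (heckeOp q a b f) =
      heckeOp q a.succ b.succ (prependLetter k c f) := by
  ext I
  have hhead : (I ∘ Equiv.swap a.succ b.succ) 0 = I 0 := by
    simp [Equiv.swap_apply_of_ne_of_ne (Fin.succ_ne_zero _).symm (Fin.succ_ne_zero _).symm]
  have htail : Fin.tail (I ∘ Equiv.swap a.succ b.succ) = Fin.tail I ∘ Equiv.swap a b := by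
    ext i
    exact congrArg I ((Fin.succ_injective t).swap_apply a b i)
  simp only [prependLetter_apply, heckeOp_apply, hhead, htail]
  split_ifs
  · rfl
  · simp

lemma restrictLast_heckeOp (q : k) {t : ℕ} (c : α) (a b : Fin t) (f : (Fin (t + 1) → α) → M) :
    restrictLast k c (heckeOp q a.castSucc b.castSucc f) =
      heckeOp q a b (restrictLast k c f) := by
  ext I
  simp [restrictLast, LinearMap.funLeft_apply, heckeOp_apply, snoc_comp_swap_castSucc]

lemma restrictLast_cycleOp_prependLetter_mem {q : k} (hq : q ≠ 0) {t : ℕ} (c d : α)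
    {f : (Fin t → α) → M} (hf : f ∈ qAlternating q) :
    restrictLast k d (cycleOp q t (prependLetter k c f)) ∈ qAlternating q := by
  refine mem_qAlternating_iff.2 fun a b hab => ?_
  let Φ : ((Fin t → α) → M) →ₗ[k] ((Fin t → α) → M) :=
      restrictLast k d ∘ₗ cycleOp q t ∘ₗ prependLetter k c
  exact map_mem_pairAlternating Φ (fun g => by
    simp [Φ, prependLetter_heckeOp, cycleOp_heckeOp hq hab, restrictLast_heckeOp])
    (mem_qAlternating_iff.1 hf a b hab)

end Prefix

section InvCount

lemma swap_lt_swap_iff_of_covBy {ι : Type*} [LinearOrder ι] {a b : ι} (hab : a ⋖ b) {x y : ι}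
    (hxy : (x, y) ≠ (a, b)) (hyx : (x, y) ≠ (b, a)) :
    Equiv.swap a b x < Equiv.swap a b y ↔ x < y := by
  have hx := @hab.2 x
  have hy := @hab.2 y
  have hlt := hab.lt
  simp only [Equiv.swap_apply_def]
  grind

lemma invCount_mul_swap {t : ℕ} (σ : Equiv.Perm (Fin t)) {a b : Fin t} (hab : a ⋖ b)
    (h : σ a < σ b) : invCount (σ * Equiv.swap a b) = invCount σ + 1 := by
  let s : Equiv.Perm (Fin t) := Equiv.swap a b
  let inversions (τ : Equiv.Perm (Fin t)) : Finset (Fin t × Fin t) :=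
    Finset.univ.filter fun p => p.1 < p.2 ∧ τ p.2 < τ p.1
  have mem_inversions (τ : Equiv.Perm (Fin t)) (p : Fin t × Fin t) :
      p ∈ inversions τ ↔ p.1 < p.2 ∧ τ p.2 < τ p.1 := Finset.mem_filter_univ p
  have hmem : (a, b) ∉ (inversions σ).map (Equiv.prodCongr s s).toEmbedding := by
    simp [mem_inversions, s, Finset.mem_map_equiv, hab.lt.not_gt]
  have hinv : inversions (σ * s) =
      Finset.cons (a, b) ((inversions σ).map (Equiv.prodCongr s s).toEmbedding) hmem := by
    ext ⟨x, y⟩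
    simp only [mem_inversions, s, Finset.mem_cons, Finset.mem_map_equiv, Equiv.prodCongr_symm,
      Equiv.symm_swap, Equiv.prodCongr_apply, Prod.map_apply, Equiv.Perm.mul_apply]
    by_cases hxy : (x, y) = (a, b)
    · obtain ⟨rfl, rfl⟩ := Prod.mk.inj hxy
      simp [hab.lt, h]
    by_cases hyx : (x, y) = (b, a)
    · obtain ⟨rfl, rfl⟩ := Prod.mk.inj hyx
      simp [hab.lt.not_gt, hab.lt.ne', h.not_gt]
    · simp [hxy, swap_lt_swap_iff_of_covBy hab hxy hyx]
  exact (congrArg Finset.card hinv).trans (by rw [Finset.card_cons, Finset.card_map]; rfl)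

lemma invCount_one (t : ℕ) : invCount (1 : Equiv.Perm (Fin t)) = 0 := by
  rw [invCount, Finset.card_eq_zero, Finset.filter_eq_empty_iff]
  exact fun p _ h => h.1.asymm h.2

end InvCount

section Antisymmetrizer

variable {k : Type*} [Field k] {α : Type*} [LinearOrder α] {N : ℕ}

/-- The basis function of the quantum exterior power attached to the word `J`: it sends the
rearrangement `J ∘ σ` to `(-q) ^ ℓ(σ)` and every other word to `0`. -/
def antisymmetrizer (q : k) (J K : Fin N → α) : k :=
  ∑ σ : Equiv.Perm (Fin N), if K = J ∘ σ then (-q) ^ invCount σ else 0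

lemma antisymmetrizer_mem_qAlternating {q : k} (hq : q ≠ 0) {J : Fin N → α} (hJ : StrictMono J) :
    antisymmetrizer q J ∈ qAlternating q := by
  refine mem_qAlternating_iff.2 fun a b hab => (mem_pairAlternating_iff hq).2 ⟨?_, ?_⟩
  · intro K hK
    refine Finset.sum_eq_zero fun σ _ => if_neg ?_
    rintro rfl
    exact hab.lt.ne (σ.injective (hJ.injective hK))
  · intro K hK
    simp only [antisymmetrizer, smul_eq_mul, Finset.mul_sum]
    rw [← Equiv.sum_comp (Equiv.mulRight (Equiv.swap a b))]
    refine Finset.sum_congr rfl fun σ _ => ?_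
    have hiff : K ∘ Equiv.swap a b = J ∘ (σ * Equiv.swap a b) ↔ K = J ∘ σ := by
      rw [Equiv.Perm.coe_mul, ← Function.comp_assoc]
      exact (Equiv.swap a b).surjective.injective_comp_right.eq_iff
    simp only [Equiv.coe_mulRight, hiff]
    split_ifs with hKσ
    · subst hKσ
      rw [invCount_mul_swap σ hab (hJ.lt_iff_lt.1 hK), pow_succ']
    · simp

lemma antisymmetrizer_apply_of_strictMono (q : k) {J K : Fin N → α} (hJ : StrictMono J)
    (hK : StrictMono K) : antisymmetrizer q J K = if K = J then 1 else 0 := by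
  have hiff (σ : Equiv.Perm (Fin N)) : K = J ∘ σ ↔ σ = 1 ∧ K = J := by
    constructor
    · rintro rfl
      have heq : J ∘ σ = J := (hK.range_inj hJ).1 (σ.surjective.range_comp J)
      exact ⟨Equiv.ext fun i => hJ.injective (congrFun heq i), heq⟩
    · rintro ⟨rfl, rfl⟩
      rfl
  simp [antisymmetrizer, hiff, ite_and, invCount_one]

lemma eq_sum_antisymmetrizer [Fintype α] {q : k} (hq : q ≠ 0) {w : (Fin N → α) → k}
    (hw : w ∈ qAlternating q) :
    w = ∑ J : {J : Fin N → α // StrictMono J}, w J • antisymmetrizer q J.1 := by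
  have hdiff : w - ∑ J : {J : Fin N → α // StrictMono J}, w J • antisymmetrizer q J.1 ∈
      qAlternating q :=
    sub_mem hw <| sum_mem fun J _ =>
      Submodule.smul_mem _ _ (antisymmetrizer_mem_qAlternating hq J.2)
  rw [← sub_eq_zero]
  ext K
  refine (Submodule.mem_bot k).1 (apply_mem_of_forall_strictMono hq hdiff ⊥ (fun I hI => ?_) K)
  have hsum : ∑ J : {J : Fin N → α // StrictMono J}, w J * antisymmetrizer q J.1 I = w I := by
    rw [Finset.sum_eq_single_of_mem ⟨I, hI⟩ (Finset.mem_univ _)]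
    · simp [antisymmetrizer_apply_of_strictMono q hI hI]
    · intro J _ hJ
      have hne : I ≠ J := fun h => hJ (Subtype.ext h.symm)
      simp [antisymmetrizer_apply_of_strictMono q J.2 hI, hne]
  simp [hsum]

end Antisymmetrizer

section Monomials

variable {A ι κ : Type*} [Monoid A] {N : ℕ}

lemma exists_prod_ofFn_eq_mul_mul {a b : Fin N} (hab : a ⋖ b) (g : Fin N → A) :
    ∃ p r, ∀ g', (∀ i, i ≠ a → i ≠ b → g' i = g i) →
      (List.ofFn g').prod = p * (g' a * g' b) * r := by
  have hval : a.val + 1 = b.val := Order.covBy_iff_add_one_eq.1 (Fin.covBy_iff.1 hab)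
  refine ⟨((List.ofFn g).take a).prod, ((List.ofFn g).drop (b + 1)).prod, fun g' hg => ?_⟩
  have htake : (List.ofFn g').take a = (List.ofFn g).take a := by
    refine List.ext_getElem (by simp) fun i hi _ => ?_
    simp only [List.getElem_take, List.getElem_ofFn]
    simp only [List.length_take, List.length_ofFn] at hi
    apply hg <;> simp only [ne_eq, Fin.ext_iff] <;> omega
  have hdrop : (List.ofFn g').drop (b + 1) = (List.ofFn g).drop (b + 1) := by
    refine List.ext_getElem (by simp) fun i _ _ => ?_
    simp only [List.getElem_drop, List.getElem_ofFn]
    apply hg <;> simp only [ne_eq, Fin.ext_iff] <;> omega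
  have hmid : (List.ofFn g').drop a = g' a :: g' b :: (List.ofFn g').drop (b + 1) := by
    rw [List.drop_eq_getElem_cons (by simp), hval, List.drop_eq_getElem_cons (by simp)]
    simp
  rw [← List.take_append_drop a (List.ofFn g'), hmid, htake, hdrop]
  simp [mul_assoc]

/-- The monomial `X_{I,J} = X (I 0) (J 0) * X (I 1) (J 1) * ⋯`. -/
def wordProd (X : ι → κ → A) (I : Fin N → ι) (J : Fin N → κ) : A :=
  (List.ofFn fun i => X (I i) (J i)).prod

lemma wordProd_snoc (X : ι → κ → A) (I : Fin (N + 1) → ι) (J : Fin N → κ) (c : κ) :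
    wordProd X I (Fin.snoc J c) = wordProd X (Fin.init I) J * X (I (Fin.last N)) c := by
  rw [wordProd, List.ofFn_succ', List.concat_eq_append, List.prod_append]
  simp [wordProd, Fin.init]

end Monomials

section WordSum

variable {R A ι κ : Type*} [CommSemiring R] [Semiring A] [Algebra R A] [Fintype κ] {N : ℕ}

/-- The intertwiner sending a coefficient function `f` on words of columns to the function
`I ↦ ∑ J, f J X_{I,J}` on words of rows. -/
def wordSum (X : ι → κ → A) : ((Fin N → κ) → R) →ₗ[R] ((Fin N → ι) → A) where
  toFun f I := ∑ J, f J • wordProd X I J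
  map_add' f g := by ext I; simp [add_smul, Finset.sum_add_distrib]
  map_smul' c f := by ext I; simp [mul_smul, Finset.smul_sum]

lemma wordSum_apply (X : ι → κ → A) (f : (Fin N → κ) → R) (I : Fin N → ι) :
    wordSum X f I = ∑ J, f J • wordProd X I J :=
  rfl

lemma wordSum_prependLetter [DecidableEq κ] (X : ι → κ → A) (w : (Fin N → κ) → R) (r : ι)
    (c : κ) (I : Fin N → ι) :
    wordSum X (prependLetter R c w) (Fin.cons r I) = X r c * wordSum X w I := by
  simp only [wordSum_apply]
  rw [← Equiv.sum_comp (Fin.consEquiv fun _ => κ), Fintype.sum_prod_type,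
    Finset.sum_eq_single_of_mem c (Finset.mem_univ c)]
  · simp [prependLetter_apply, Fin.consEquiv, wordProd, Finset.mul_sum, List.ofFn_succ]
  · intro d _ hdc
    simp [prependLetter_apply, Fin.consEquiv, hdc]

lemma wordSum_eq_sum_restrictLast (X : ι → κ → A) (f : (Fin (N + 1) → κ) → R)
    (I : Fin (N + 1) → ι) :
    wordSum X f I =
      ∑ c, wordSum X (restrictLast R c f) (Fin.init I) * X (I (Fin.last N)) c := by
  rw [wordSum_apply, ← Equiv.sum_comp (Fin.snocEquiv fun _ => κ), Fintype.sum_prod_type]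
  refine Finset.sum_congr rfl fun c _ => ?_
  rw [wordSum_apply, Finset.sum_mul]
  refine Finset.sum_congr rfl fun J _ => ?_
  exact (congrArg _ (wordProd_snoc X I J c)).trans (smul_mul_assoc ..).symm

end WordSum

section Intertwining

variable {k A : Type*} [Field k] [Ring A] [Algebra k A] {m n N : ℕ}

/-- The defining relations in `R`-matrix (Faddeev–Reshetikhin–Takhtajan) form. -/
lemma exchange_of_isQMat {q : k} (hq : q ≠ 0) {X : Fin m → Fin n → A} (hX : IsQMat q X)
    (x y : Fin m) (z w : Fin n) :
    exchangeCoeff q z w • (X x z * X y w) + X x w * X y z =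
      exchangeCoeff q x y • (X x z * X y w) + X y z * X x w := by
  obtain ⟨row, col, anti, diag⟩ := hX
  have diag' {i r : Fin m} {j l : Fin n} (hir : i < r) (hjl : j < l) :
      X i j * X r l = X r l * X i j + (q - q⁻¹) • (X i l * X r j) := by
    rw [← diag i r j l hir hjl]
    abel
  rcases lt_trichotomy x y with hxy | rfl | hxy <;> rcases lt_trichotomy z w with hzw | rfl | hzw
  · rw [exchangeCoeff_of_lt q hxy, exchangeCoeff_of_lt q hzw, anti x y z w hxy hzw]
  · rw [exchangeCoeff_of_lt q hxy, exchangeCoeff_self, col x y z hxy]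
    match_scalars
    field_simp
    ring
  · rw [exchangeCoeff_of_lt q hxy, exchangeCoeff_of_gt q hzw, diag' hxy hzw]
    module
  · rw [exchangeCoeff_of_lt q hzw, exchangeCoeff_self, row x z w hzw]
    match_scalars
    field_simp
    ring
  · rw [exchangeCoeff_self, exchangeCoeff_self]
  · rw [exchangeCoeff_of_gt q hzw, exchangeCoeff_self, row x w z hzw]
    match_scalars
    field_simp
    ring
  · rw [exchangeCoeff_of_gt q hxy, exchangeCoeff_of_lt q hzw, diag' hxy hzw,
      anti y x z w hxy hzw]
    module
  · rw [exchangeCoeff_of_gt q hxy, exchangeCoeff_self, col y x z hxy]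
    match_scalars
    field_simp
    ring
  · rw [exchangeCoeff_of_gt q hxy, exchangeCoeff_of_gt q hzw, anti y x w z hxy hzw]

lemma wordProd_exchange {q : k} (hq : q ≠ 0) {X : Fin m → Fin n → A} (hX : IsQMat q X)
    {a b : Fin N} (hab : a ⋖ b) (I : Fin N → Fin m) (J : Fin N → Fin n) :
    exchangeCoeff q (J a) (J b) • wordProd X I J + wordProd X I (J ∘ Equiv.swap a b) =
      exchangeCoeff q (I a) (I b) • wordProd X I J + wordProd X (I ∘ Equiv.swap a b) J := by
  obtain ⟨p, r, hpr⟩ := exists_prod_ofFn_eq_mul_mul hab fun i => X (I i) (J i)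
  have hIJ : wordProd X I J = p * (X (I a) (J a) * X (I b) (J b)) * r :=
    hpr _ fun _ _ _ => rfl
  have hJ : wordProd X I (J ∘ Equiv.swap a b) = p * (X (I a) (J b) * X (I b) (J a)) * r :=
    (hpr _ fun i hia hib => by simp [Equiv.swap_apply_of_ne_of_ne hia hib]).trans (by simp)
  have hI : wordProd X (I ∘ Equiv.swap a b) J = p * (X (I b) (J a) * X (I a) (J b)) * r :=
    (hpr _ fun i hia hib => by simp [Equiv.swap_apply_of_ne_of_ne hia hib]).trans (by simp)
  have hpair := congrArg (fun x => p * x * r) (exchange_of_isQMat hq hX (I a) (I b) (J a) (J b))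
  simpa [hIJ, hJ, hI, mul_add, add_mul] using hpair

lemma wordSum_heckeOp {q : k} (hq : q ≠ 0) {X : Fin m → Fin n → A} (hX : IsQMat q X)
    {a b : Fin N} (hab : a ⋖ b) (f : (Fin N → Fin n) → k) :
    wordSum X (heckeOp q a b f) = heckeOp q a b (wordSum X f) := by
  ext I
  have hreindex : ∑ J : Fin N → Fin n, f (J ∘ Equiv.swap a b) • wordProd X I J =
      ∑ J, f J • wordProd X I (J ∘ Equiv.swap a b) :=
    Fintype.sum_equiv ((Equiv.swap a b).arrowCongr (Equiv.refl _)) _ _ fun J => by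
      simp [Equiv.arrowCongr, comp_swap_comp_swap]
  calc wordSum X (heckeOp q a b f) I
      = ∑ J, f J • (exchangeCoeff q (J a) (J b) • wordProd X I J +
          wordProd X I (J ∘ Equiv.swap a b)) := by
        simp only [wordSum_apply, heckeOp_apply, add_smul, smul_add, Finset.sum_add_distrib,
          hreindex, smul_smul, smul_eq_mul, mul_comm]
    _ = ∑ J, f J • (exchangeCoeff q (I a) (I b) • wordProd X I J +
          wordProd X (I ∘ Equiv.swap a b) J) := by
        simp only [wordProd_exchange hq hX hab]
    _ = heckeOp q a b (wordSum X f) I := by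
        simp only [wordSum_apply, heckeOp_apply, smul_add, Finset.sum_add_distrib,
          Finset.smul_sum, smul_comm (exchangeCoeff q (I a) (I b))]

lemma wordSum_mem_qAlternating {q : k} (hq : q ≠ 0) {X : Fin m → Fin n → A} (hX : IsQMat q X)
    {w : (Fin N → Fin n) → k} (hw : w ∈ qAlternating q) : wordSum X w ∈ qAlternating q :=
  mem_qAlternating_iff.2 fun a b hab =>
    map_mem_pairAlternating (wordSum X) (wordSum_heckeOp hq hX hab)
      (mem_qAlternating_iff.1 hw a b hab)

lemma wordSum_cycleOp {q : k} (hq : q ≠ 0) {X : Fin m → Fin n → A} (hX : IsQMat q X)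
    {t : ℕ} (f : (Fin (t + 1) → Fin n) → k) :
    wordSum X (cycleOp q t f) = cycleOp q t (wordSum X f) := by
  have hcov (i : Fin t) : i.castSucc ⋖ i.succ := by simp [Fin.covBy_iff, Order.covBy_iff_add_one_eq]
  unfold cycleOp
  rw [← List.map_reverse, ← List.map_reverse]
  induction (List.finRange t).reverse with
  | nil => rfl
  | cons i L ih => simp [wordSum_heckeOp hq hX (hcov i), ih]

end Intertwining

section Minors

variable {k A : Type*} [Field k] [Ring A] [Algebra k A] {m n t : ℕ}

/-- The set of `t × t` quantum minors of the matrix `X`. -/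
def minors (q : k) (X : Fin m → Fin n → A) (t : ℕ) : Set A :=
  {x | ∃ (I : Finset (Fin m)) (J : Finset (Fin n)) (hI : I.card = t) (hJ : J.card = t),
    x = qminor q X I J hI hJ}

lemma wordSum_antisymmetrizer (q : k) (X : Fin m → Fin n → A) (I : Fin t → Fin m)
    (J : Fin t → Fin n) :
    wordSum X (antisymmetrizer q J) I = qdet q fun a b => X (I a) (J b) := by
  simp only [wordSum_apply, antisymmetrizer, qdet, Finset.sum_smul, ite_smul, zero_smul]
  rw [Finset.sum_comm]
  simp [wordProd]

lemma qminor_eq_wordSum (q : k) (X : Fin m → Fin n → A) (I : Finset (Fin m)) (J : Finset (Fin n))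
    (hI : I.card = t) (hJ : J.card = t) :
    qminor q X I J hI hJ =
      wordSum X (antisymmetrizer q (J.orderEmbOfFin hJ)) (I.orderEmbOfFin hI) :=
  (wordSum_antisymmetrizer q X _ _).symm

lemma wordSum_antisymmetrizer_mem_minors (q : k) (X : Fin m → Fin n → A) {I : Fin t → Fin m}
    {J : Fin t → Fin n} (hI : StrictMono I) (hJ : StrictMono J) :
    wordSum X (antisymmetrizer q J) I ∈ minors q X t := by
  have hcard {l : ℕ} {K : Fin t → Fin l} (hK : StrictMono K) :
      (Finset.univ.image K).card = t := by
    simp [Finset.card_image_of_injective _ hK.injective]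
  refine ⟨Finset.univ.image I, Finset.univ.image J, hcard hI, hcard hJ, ?_⟩
  rw [qminor_eq_wordSum, ← Finset.orderEmbOfFin_unique (hcard hI) (by simp) hI,
    ← Finset.orderEmbOfFin_unique (hcard hJ) (by simp) hJ]

lemma wordSum_mem_span_minors {q : k} (hq : q ≠ 0) {X : Fin m → Fin n → A} (hX : IsQMat q X)
    {w : (Fin t → Fin n) → k} (hw : w ∈ qAlternating q) (I : Fin t → Fin m) :
    wordSum X w I ∈ Submodule.span k (minors q X t) := by
  refine apply_mem_of_forall_strictMono hq (wordSum_mem_qAlternating hq hX hw) _ (fun I hI => ?_) I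
  rw [eq_sum_antisymmetrizer hq hw, map_sum, Finset.sum_apply]
  refine sum_mem fun J _ => ?_
  rw [map_smul]
  exact Submodule.smul_mem _ _
    (Submodule.subset_span (wordSum_antisymmetrizer_mem_minors q X hI J.2))

lemma entry_mul_mem_span_minors {q : k} (hq : q ≠ 0) {X : Fin m → Fin n → A} (hX : IsQMat q X)
    (r : Fin m) (c : Fin n) {x : A} (hx : x ∈ minors q X t) :
    X r c * x ∈ Submodule.span Aᵐᵒᵖ (minors q X t) := by
  obtain ⟨I, J, hI, hJ, rfl⟩ := hx
  let w := antisymmetrizer q (J.orderEmbOfFin hJ)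
  have hw : w ∈ qAlternating q :=
    antisymmetrizer_mem_qAlternating hq (J.orderEmbOfFin hJ).strictMono
  rw [qminor_eq_wordSum, ← wordSum_prependLetter]
  refine apply_mem_of_cycleOp_apply_mem hq
    ((Submodule.span Aᵐᵒᵖ (minors q X t)).restrictScalars k) (fun K => ?_) _
  rw [← wordSum_cycleOp hq hX, wordSum_eq_sum_restrictLast]
  refine sum_mem fun d _ => Submodule.smul_mem _ (MulOpposite.op (X _ d)) ?_
  exact Submodule.span_le_restrictScalars k Aᵐᵒᵖ _ <|
    wordSum_mem_span_minors hq hX (restrictLast_cycleOp_prependLetter_mem hq c d hw) _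

end Minors

section Ideals

lemma mul_mem_span_op_of_adjoin_eq_top {k A : Type*} [CommSemiring k] [Semiring A] [Algebra k A]
    {G s : Set A} (hG : Algebra.adjoin k G = ⊤)
    (h : ∀ g ∈ G, ∀ x ∈ s, g * x ∈ Submodule.span Aᵐᵒᵖ s) (a : A) {y : A}
    (hy : y ∈ Submodule.span Aᵐᵒᵖ s) : a * y ∈ Submodule.span Aᵐᵒᵖ s := by
  have ha : a ∈ Algebra.adjoin k G := hG ▸ Algebra.mem_top
  induction ha using Algebra.adjoin_induction generalizing y with
  | mem g hg =>
    induction hy using Submodule.span_induction with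
    | mem x hx => exact h g hg x hx
    | zero => simp
    | add x z _ _ hx hz => simpa only [mul_add] using add_mem hx hz
    | smul b x _ hx => simpa only [mul_smul_comm] using Submodule.smul_mem _ b hx
  | algebraMap c =>
    rw [Algebra.commutes]
    exact Submodule.smul_mem _ (MulOpposite.op (algebraMap k A c)) hy
  | add a b _ _ ha hb => simpa only [add_mul] using add_mem (ha hy) (hb hy)
  | mul a b _ _ ha hb => simpa only [mul_assoc] using ha (hb hy)

lemma mem_twoSidedIdeal_span_iff_mem_span_op {A : Type*} [Ring A] {s : Set A}
    (h : ∀ (a : A), ∀ y ∈ Submodule.span Aᵐᵒᵖ s, a * y ∈ Submodule.span Aᵐᵒᵖ s) (x : A) :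
    x ∈ TwoSidedIdeal.span s ↔ x ∈ Submodule.span Aᵐᵒᵖ s := by
  constructor
  · let R := Submodule.span Aᵐᵒᵖ s
    let I : TwoSidedIdeal A := .mk' R R.zero_mem R.add_mem R.neg_mem (h _ _)
      fun {_ b} hx => R.smul_mem (MulOpposite.op b) hx
    have hI (z : A) : z ∈ I ↔ z ∈ R := TwoSidedIdeal.mem_mk' ..
    have hle : TwoSidedIdeal.span s ≤ I :=
      TwoSidedIdeal.span_le.2 fun z hz => (hI z).2 (Submodule.subset_span hz)
    exact fun hx => (hI x).1 (hle hx)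
  · intro hx
    induction hx using Submodule.span_induction with
    | mem y hy => exact TwoSidedIdeal.subset_span hy
    | zero => exact TwoSidedIdeal.zero_mem _
    | add y z _ _ hy hz => exact TwoSidedIdeal.add_mem _ hy hz
    | smul b y _ hy => exact TwoSidedIdeal.mul_mem_right _ _ _ hy

end Ideals

section Generators

variable {k : Type*} [Field k] (q : k) (m n : ℕ)

lemma isQMat_qX : IsQMat q (qX k q m n) := by
  refine ⟨fun i j l hjl => ?_, fun i r j hir => ?_, fun i r j l hir hjl => ?_,
    fun i r j l hir hjl => ?_⟩
  · simpa [qX] using RingQuot.mkAlgHom_rel k (QMRel.row (q := q) i j l hjl)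
  · simpa [qX] using RingQuot.mkAlgHom_rel k (QMRel.col (q := q) i r j hir)
  · simpa [qX] using RingQuot.mkAlgHom_rel k (QMRel.anti (q := q) i r j l hir hjl)
  · rw [sub_eq_iff_eq_add']
    simpa only [qX, map_mul, map_add, map_smul] using
      RingQuot.mkAlgHom_rel k (QMRel.diag (q := q) i r j l hir hjl)

lemma adjoin_qX_eq_top :
    Algebra.adjoin k (Set.range fun p : Fin m × Fin n => qX k q m n p.1 p.2) = ⊤ := by
  have hrange : (Set.range fun p : Fin m × Fin n => qX k q m n p.1 p.2) =
      RingQuot.mkAlgHom k (QMRel k q m n) '' Set.range (FreeAlgebra.ι k) :=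
    Set.range_comp ..
  rw [hrange, Algebra.adjoin_image, FreeAlgebra.adjoin_range_ι, Algebra.map_top,
    AlgHom.range_eq_top]
  exact RingQuot.mkAlgHom_surjective k _

end Generators

end QuantumMatrix

open QuantumMatrix in
theorem twoSided_eq_right_ideal_of_minors_general {k A : Type*} [Field k] [Ring A] [Algebra k A]
    {q : k} (hq : q ≠ 0) {m n : ℕ} {X : Fin m → Fin n → A} (hX : IsQMat q X)
    (hgen : Algebra.adjoin k (Set.range fun p : Fin m × Fin n => X p.1 p.2) = ⊤) (t : ℕ) (a : A) :
    a ∈ TwoSidedIdeal.span (minors q X t) ↔ a ∈ Submodule.span Aᵐᵒᵖ (minors q X t) := by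
  refine mem_twoSidedIdeal_span_iff_mem_span_op (fun b y hy => ?_) a
  refine mul_mem_span_op_of_adjoin_eq_top hgen ?_ b hy
  rintro _ ⟨p, rfl⟩ x hx
  exact entry_mul_mem_span_minors hq hX p.1 p.2 hx

/-- The two-sided ideal of `O_q(M_{m,n})` generated by the `t × t` quantum minors coincides
with the right ideal they generate. -/
theorem twoSided_eq_right_ideal_of_minors {k : Type*} [Field k]
    (q : k) (hq : q ≠ 0) {m n : ℕ} (t : ℕ) (ht1 : 1 ≤ t) (ht : t ≤ min m n) :
    ∀ a : OqM k q m n,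
      a ∈ TwoSidedIdeal.span {x : OqM k q m n |
          ∃ (I : Finset (Fin m)) (J : Finset (Fin n)) (hI : I.card = t) (hJ : J.card = t),
            x = qminor q (qX k q m n) I J hI hJ} ↔
      a ∈ Submodule.span (OqM k q m n)ᵐᵒᵖ {x : OqM k q m n |
          ∃ (I : Finset (Fin m)) (J : Finset (Fin n)) (hI : I.card = t) (hJ : J.card = t),
            x = qminor q (qX k q m n) I J hI hJ} :=
  fun a => twoSided_eq_right_ideal_of_minors_general hq (QuantumMatrix.isQMat_qX q m n)
    (QuantumMatrix.adjoin_qX_eq_top q m n) t a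
end
end

section
/- For 1 ≤ t ≤ min{m,n}, the ideal of the localisation O_q(M_{m,n})[X_{1n}⁻¹] generated by all t×t quantum minors of X coincides with the right ideal generated by those t×t minors [I|J] with 1 ∈ I and n ∈ J. -/
noncomputable section
open scoped BigOperators

/-!
Write `o` for the first row, `w` for the last column, and `S` for the right ideal generated by the
`t × t` minors using both. Everything rests on two facts about `S`.

* `S` is stable under left multiplication. Moving an entry of a row past a minor is governed by the
  R-matrix of the defining relations: the products `X s l * [R|J]` are linear combinations of
  products `[R'|J'] * X s' l'`, where `J'` still contains `w` if `J` does, since columns are only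
  replaced by larger ones and `w` is the largest. If `o` is the first row of `R` it is also the
  first row of `R'`, since the R-matrix is triangular. Finally `X o w` commutes with every minor up
  to a scalar, so its inverse preserves `S` as well.
* Since `X o w` is invertible, a minor lies in `S` as soon as `X o w` times it does. For a minor
  with `o` among its rows or `w` among its columns this follows from a Laplace expansion, along a
  repeated row `o` or a repeated column `w`, whose value is `0` and whose other terms lie in `S`. An
  arbitrary minor is treated by expanding the minor with row `o` and column `w` adjoined along `o`;
  expanding it along another row shows that it lies in `S`.
-/

section Position

variable {γ : Type*} [LinearOrder γ]

/-- The number of elements of `J` below `j`: the (zero-based) position of `j` in `J`, which is the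
exponent of `-q` in a Laplace expansion. -/
def numLT (J : Finset γ) (j : γ) : ℕ := (J.filter (· < j)).card

/-- The number of elements of `J` strictly between `j` and `l`. -/
def numBetween (J : Finset γ) (j l : γ) : ℕ := (J.filter fun x => j < x ∧ x < l).card

variable {J : Finset γ} {j l p : γ}

lemma numLT_eq_add_numBetween (hj : j ∈ J) (hjl : j < l) :
    numLT J l = numLT J j + 1 + numBetween J j l := by
  have h_one : 1 = (J.filter (· = j)).card := by simp [Finset.filter_eq', hj]
  rw [h_one]
  simp only [numLT, numBetween, Finset.card_filter, ← Finset.sum_add_distrib]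
  refine Finset.sum_congr rfl fun x _ => ?_
  grind

lemma numLT_strictMonoOn (J : Finset γ) : StrictMonoOn (numLT J) J := fun j hj l _ hjl => by
  have := numLT_eq_add_numBetween (Finset.mem_coe.1 hj) hjl
  omega

lemma numLT_lt_card (hj : j ∈ J) : numLT J j < J.card :=
  Finset.card_lt_card (Finset.filter_ssubset.2 ⟨j, hj, lt_irrefl j⟩)

lemma image_numLT (J : Finset γ) : J.image (numLT J) = Finset.range J.card := by
  refine Finset.eq_of_subset_of_card_le (fun i hi => ?_) ?_
  · obtain ⟨j, hj, rfl⟩ := Finset.mem_image.1 hi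
    exact Finset.mem_range.2 (numLT_lt_card hj)
  · rw [Finset.card_image_of_injOn (numLT_strictMonoOn J).injOn, Finset.card_range]

lemma sum_comp_numLT {M : Type*} [AddCommMonoid M] (J : Finset γ) (F : ℕ → M) :
    ∑ j ∈ J, F (numLT J j) = ∑ i ∈ Finset.range J.card, F i := by
  rw [← image_numLT, Finset.sum_image (numLT_strictMonoOn J).injOn]

lemma numLT_erase_add_one (hl : l ∈ J) (hlj : l < j) : numLT (J.erase l) j + 1 = numLT J j := by
  rw [numLT, Finset.filter_erase, Finset.card_erase_add_one (by simp [hl, hlj]), numLT]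

lemma numLT_erase_of_le (hjl : j ≤ l) : numLT (J.erase l) j = numLT J j := by
  rw [numLT, Finset.filter_erase, Finset.erase_eq_of_notMem (by simp [hjl]), numLT]

lemma numLT_insert_add_one (hl : l ∉ J) (hlj : l < j) : numLT (insert l J) j = numLT J j + 1 := by
  rw [← numLT_erase_add_one (Finset.mem_insert_self l J) hlj, Finset.erase_insert hl]

lemma numLT_insert_of_le (hjl : j ≤ l) : numLT (insert l J) j = numLT J j := by
  rw [numLT, Finset.filter_insert, if_neg hjl.not_gt, numLT]

lemma numLT_eq_card (hj : ∀ x ∈ J, x < j) : numLT J j = J.card := by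
  rw [numLT, Finset.filter_true_of_mem hj]

lemma numBetween_erase_add_one (hp : p ∈ J) (hjp : j < p) (hpl : p < l) :
    numBetween (J.erase p) j l + 1 = numBetween J j l := by
  rw [numBetween, Finset.filter_erase, Finset.card_erase_add_one (by simp [hp, hjp, hpl]),
    numBetween]

lemma numBetween_erase_of_not (h : ¬(j < p ∧ p < l)) :
    numBetween (J.erase p) j l = numBetween J j l := by
  rw [numBetween, Finset.filter_erase, Finset.erase_eq_of_notMem (by simpa using fun _ => h),
    numBetween]

lemma numLT_filter_between (hpl : p < l) :
    numLT (J.filter fun x => j < x ∧ x < l) p = numBetween J j p := by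
  rw [numLT, numBetween, Finset.filter_filter]
  congr 1
  grind

lemma numLT_insert_erase_self (hj : j ∈ J) (hjl : j < l) :
    numLT (insert l (J.erase j)) l = numLT J j + numBetween J j l := by
  have h_erase := numLT_erase_add_one hj hjl
  rw [numLT_eq_add_numBetween hj hjl] at h_erase
  rw [numLT_insert_of_le le_rfl]
  omega

lemma numBetween_add_numLT_insert_erase (hj : j ∈ J) (hl : l ∉ J) (hp : p ∈ J) (hjl : j < l) :
    numBetween J j l + numLT (insert l (J.erase j)) p =
      numLT J p + numBetween (J.erase p) j l := by
  have hl' : l ∉ J.erase j := fun h => hl (Finset.mem_of_mem_erase h)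
  rcases le_or_gt p j with hpj | hjp
  · rw [numLT_insert_of_le (hpj.trans hjl.le), numLT_erase_of_le hpj,
      numBetween_erase_of_not fun h => hpj.not_gt h.1, add_comm]
  · have h_erase := numLT_erase_add_one hj hjp
    rcases lt_or_ge p l with hpl | hlp
    · have h_between := numBetween_erase_add_one hp hjp hpl
      rw [numLT_insert_of_le hpl.le]
      omega
    · have hlp' : l < p := hlp.lt_of_ne fun h => hl (h ▸ hp)
      rw [numLT_insert_add_one hl' hlp', numBetween_erase_of_not fun h => hlp.not_gt h.2]
      omega

/- The summands telescope: each is `a ^ (numLT J j + 2 * i + 2) - a ^ (numLT J j + 2 * i)`, where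
`i = numBetween J j p` runs through an initial segment of `ℕ`. -/
lemma pow_numLT_add_sum_between {k : Type*} [Field k] {a : k} (ha : a ≠ 0) (hj : j ∈ J) (l : γ) :
    a ^ numLT J j + ∑ p ∈ J.filter (fun x => j < x ∧ x < l),
      (a - a⁻¹) * a ^ (numLT J p + numBetween J j p) = a ^ (numLT J j + 2 * numBetween J j l) := by
  have h_term : ∀ p ∈ J.filter (fun x => j < x ∧ x < l),
      (a - a⁻¹) * a ^ (numLT J p + numBetween J j p) =
        a ^ numLT J j * ((a ^ 2) ^ numLT (J.filter fun x => j < x ∧ x < l) p * (a ^ 2 - 1)) := by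
    intro p hp
    obtain ⟨-, hjp, hpl⟩ := Finset.mem_filter.1 hp
    rw [numLT_filter_between hpl, numLT_eq_add_numBetween hj hjp]
    field_simp
    ring
  rw [Finset.sum_congr rfl h_term, ← Finset.mul_sum,
    sum_comp_numLT _ fun i => (a ^ 2) ^ i * (a ^ 2 - 1), ← Finset.sum_mul, geom_sum_mul,
    ← numBetween]
  ring

end Position

section RowExpansion

variable {k : Type*} [Field k] {A : Type*} [Ring A] [Algebra k A] {γ : Type*} [LinearOrder γ]

/-- The quantum Laplace expansion along a row `x` placed on top of the rows of the minors `d J`. -/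
def rowExpansion (q : k) (x : γ → A) (d : Finset γ → A) (J : Finset γ) : A :=
  ∑ j ∈ J, (-q) ^ numLT J j • (x j * d (J.erase j))

lemma sum_sum_erase {M : Type*} [AddCommMonoid M] (J : Finset γ) (F : γ → γ → M) :
    ∑ j ∈ J, ∑ l ∈ J.erase j, F j l = ∑ j ∈ J, ∑ l ∈ J.filter (j < ·), (F j l + F l j) := by
  have h_split : ∀ j ∈ J, ∑ l ∈ J.erase j, F j l =
      ∑ l ∈ J.filter (j < ·), F j l + ∑ l ∈ J.filter (· < j), F j l := fun j _ => by
    rw [← Finset.sum_filter_add_sum_filter_not (J.erase j) (j < ·)]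
    congr 2 <;> grind
  have h_swap : ∑ j ∈ J, ∑ l ∈ J.filter (· < j), F j l =
      ∑ j ∈ J, ∑ l ∈ J.filter (j < ·), F l j := Finset.sum_comm' (by grind)
  simp only [Finset.sum_congr rfl h_split, Finset.sum_add_distrib, h_swap]

lemma rowExpansion_rowExpansion (q : k) (x y : γ → A) (d : Finset γ → A) (J : Finset γ) :
    rowExpansion q x (rowExpansion q y d) J =
      ∑ j ∈ J, ∑ l ∈ J.filter (j < ·), (-q) ^ (numLT J j + numLT (J.erase j) l) •
        ((x j * y l - q • (x l * y j)) * d ((J.erase j).erase l)) := by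
  have h_expand : rowExpansion q x (rowExpansion q y d) J = ∑ j ∈ J, ∑ l ∈ J.erase j,
      (-q) ^ (numLT J j + numLT (J.erase j) l) • (x j * y l * d ((J.erase j).erase l)) := by
    simp only [rowExpansion, Finset.mul_sum, Finset.smul_sum, mul_smul_comm, smul_smul, ← pow_add,
      mul_assoc]
  rw [h_expand, sum_sum_erase]
  refine Finset.sum_congr rfl fun j hj => Finset.sum_congr rfl fun l hl => ?_
  obtain ⟨-, hjl⟩ := Finset.mem_filter.1 hl
  have h_exponent : numLT J l + numLT (J.erase l) j = numLT J j + numLT (J.erase j) l + 1 := by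
    rw [numLT_erase_of_le hjl.le, ← numLT_erase_add_one hj hjl]
    ring
  rw [h_exponent, Finset.erase_right_comm (a := l), pow_succ, mul_smul, ← smul_add, sub_mul,
    smul_mul_assoc, neg_smul, ← sub_eq_add_neg]

lemma rowExpansion_smul (q c : k) (x : γ → A) (d : Finset γ → A) :
    rowExpansion q x (c • d) = c • rowExpansion q x d := by
  ext J
  simp only [rowExpansion, Pi.smul_apply, Finset.smul_sum, mul_smul_comm, smul_comm c]

lemma rowExpansion_insert (q : k) (x : γ → A) (d : Finset γ → A) {J : Finset γ} {l : γ}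
    (hl : l ∉ J) :
    rowExpansion q x d (insert l J) = (-q) ^ numLT J l • (x l * d J) +
      ∑ j ∈ J, (-q) ^ numLT (insert l J) j • (x j * d (insert l (J.erase j))) := by
  rw [rowExpansion, Finset.sum_insert hl, Finset.erase_insert hl, numLT_insert_of_le le_rfl]
  congr 1
  refine Finset.sum_congr rfl fun j hj => ?_
  rw [Finset.erase_insert_of_ne (ne_of_mem_of_not_mem hj hl).symm]

end RowExpansion

section QuantumMatrix

variable {k : Type*} [Field k] {A : Type*} [Ring A] [Algebra k A]
variable {ρ γ : Type*} [LinearOrder ρ] [LinearOrder γ]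

/-- `IsQMat` for arbitrary linearly ordered sets of rows and columns, with named relations. -/
structure IsQuantumMatrix (q : k) (X : ρ → γ → A) : Prop where
  row (i : ρ) {j l : γ} (hjl : j < l) : X i j * X i l = q • (X i l * X i j)
  col {i r : ρ} (j : γ) (hir : i < r) : X i j * X r j = q • (X r j * X i j)
  anti {i r : ρ} {j l : γ} (hir : i < r) (hjl : j < l) : X i l * X r j = X r j * X i l
  diag {i r : ρ} {j l : γ} (hir : i < r) (hjl : j < l) :
    X i j * X r l = X r l * X i j + (q - q⁻¹) • (X i l * X r j)

lemma IsQMat.isQuantumMatrix {q : k} {m n : ℕ} {X : Fin m → Fin n → A} (hX : IsQMat q X) :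
    IsQuantumMatrix q X where
  row i _ _ hjl := hX.1 i _ _ hjl
  col j hir := hX.2.1 _ _ j hir
  anti hir hjl := hX.2.2.1 _ _ _ _ hir hjl
  diag hir hjl := sub_eq_iff_eq_add'.1 (hX.2.2.2 _ _ _ _ hir hjl)

/-- The quantum minor on a list `R` of rows, in any order and possibly with repetitions, and a set
`J` of columns. It is `0` unless `J` has as many elements as `R`. -/
def listMinor (q : k) (X : ρ → γ → A) : List ρ → Finset γ → A
  | [] => fun J => if J = ∅ then 1 else 0
  | r :: R => rowExpansion q (X r) (listMinor q X R)

omit [LinearOrder ρ] in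
lemma listMinor_eq_zero_of_card_ne (q : k) (X : ρ → γ → A) {R : List ρ} {J : Finset γ}
    (hJ : J.card ≠ R.length) : listMinor q X R J = 0 := by
  induction R generalizing J with
  | nil => exact if_neg fun h => hJ (by simp [h])
  | cons r R ih =>
    refine Finset.sum_eq_zero fun j hj => ?_
    have h_card := Finset.card_erase_add_one hj
    rw [ih (by grind), mul_zero, smul_zero]

variable {q : k} {X : ρ → γ → A}

namespace IsQuantumMatrix

lemma listMinor_cons_cons_self (hX : IsQuantumMatrix q X) (r : ρ) (R : List ρ) :
    listMinor q X (r :: r :: R) = 0 := by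
  ext J
  refine (rowExpansion_rowExpansion ..).trans ?_
  refine Finset.sum_eq_zero fun j _ => Finset.sum_eq_zero fun l hl => ?_
  rw [hX.row r (Finset.mem_filter.1 hl).2, sub_self, zero_mul, smul_zero]

lemma listMinor_swap (hX : IsQuantumMatrix q X) (hq : q ≠ 0) {r s : ρ} (hrs : r < s) (R : List ρ) :
    listMinor q X (s :: r :: R) = (-q) • listMinor q X (r :: s :: R) := by
  ext J
  have h_minor : ∀ {j l : γ}, j < l → X s j * X r l - q • (X s l * X r j) =
      (-q) • (X r j * X s l - q • (X r l * X s j)) := fun hjl => by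
    rw [hX.diag hrs hjl, hX.anti hrs hjl]
    match_scalars <;> field_simp
    ring
  simp only [listMinor, rowExpansion_rowExpansion, Pi.smul_apply, Finset.smul_sum]
  refine Finset.sum_congr rfl fun j _ => Finset.sum_congr rfl fun l hl => ?_
  rw [h_minor (Finset.mem_filter.1 hl).2, smul_mul_assoc, smul_comm]

lemma exists_listMinor_eq_smul_of_perm (hX : IsQuantumMatrix q X) (hq : q ≠ 0) {R R' : List ρ}
    (hR : R.Perm R') : ∃ c : k, listMinor q X R = c • listMinor q X R' := by
  induction hR with
  | nil => exact ⟨1, (one_smul ..).symm⟩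
  | cons r _ ih =>
    obtain ⟨c, hc⟩ := ih
    exact ⟨c, by rw [listMinor, hc, rowExpansion_smul, listMinor]⟩
  | swap r s R =>
    rcases lt_trichotomy r s with hrs | rfl | hsr
    · exact ⟨-q, hX.listMinor_swap hq hrs R⟩
    · exact ⟨1, (one_smul ..).symm⟩
    · refine ⟨(-q)⁻¹, ?_⟩
      rw [hX.listMinor_swap hq hsr, inv_smul_smul₀ (neg_ne_zero.2 hq)]
  | trans _ _ ih ih' =>
    obtain ⟨c, hc⟩ := ih
    obtain ⟨c', hc'⟩ := ih'
    exact ⟨c * c', by rw [hc, hc', smul_smul]⟩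

lemma listMinor_eq_zero_of_not_nodup (hX : IsQuantumMatrix q X) (hq : q ≠ 0) {R : List ρ}
    (hR : ¬R.Nodup) : listMinor q X R = 0 := by
  obtain ⟨r, hr⟩ : ∃ r, List.Duplicate r R := by
    simpa [List.nodup_iff_forall_not_duplicate] using hR
  obtain ⟨R', hR'⟩ := (List.duplicate_iff_sublist.1 hr).exists_perm_append
  obtain ⟨c, hc⟩ := hX.exists_listMinor_eq_smul_of_perm hq hR'
  rw [hc]
  exact (congrArg (c • ·) (hX.listMinor_cons_cons_self r R')).trans (smul_zero c)

lemma exists_listMinor_eq_smul_sort (hX : IsQuantumMatrix q X) (hq : q ≠ 0) {R : List ρ}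
    (hR : R.Nodup) : ∃ c : k, listMinor q X R = c • listMinor q X (R.toFinset.sort (· ≤ ·)) :=
  hX.exists_listMinor_eq_smul_of_perm hq
    (List.perm_of_nodup_nodup_toFinset_eq hR (Finset.sort_nodup _ _) (by simp))

end IsQuantumMatrix

end QuantumMatrix

section Braiding

variable {k : Type*} [Field k] {A : Type*} [Ring A] [Algebra k A] {γ : Type*} [LinearOrder γ]

/-- The combination of products `d J' * z j` which, by the commutation relations of quantum
matrices, stands for moving an entry `z l` of a row from the left to the right of a minor `d J`. -/
def braid (q : k) (z : γ → A) (d : Finset γ → A) (l : γ) (J : Finset γ) : A :=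
  if l ∈ J then q⁻¹ • (d J * z l) else
    d J * z l + ∑ j ∈ J with j < l,
      ((q⁻¹ - q) * (-q) ^ numBetween J j l) • (d (insert l (J.erase j)) * z j)

/-- The Laplace expansion along a row `x` applied to a family `f l J` that behaves like
`z l * d J`, the entry of `x` having been moved to the left past `z l`. -/
def braidedExpansion (q : k) (x : γ → A) : (γ → Finset γ → A) →ₗ[k] (γ → Finset γ → A) where
  toFun f l J :=
    ∑ p ∈ J, (-q) ^ numLT J p • (if l = p then q⁻¹ else 1) • (x p * f l (J.erase p)) +
      x l * ∑ p ∈ J with p < l, ((q⁻¹ - q) * (-q) ^ numLT J p) • f p (J.erase p)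
  map_add' f g := by
    ext l J
    simp only [Pi.add_apply, mul_add, smul_add, Finset.sum_add_distrib]
    abel
  map_smul' c f := by
    ext l J
    simp only [Pi.smul_apply, RingHom.id_apply, smul_add, Finset.smul_sum, Finset.mul_sum,
      mul_smul_comm, smul_comm c]

lemma braidedExpansion_apply (q : k) (x : γ → A) (f : γ → Finset γ → A) (l : γ) (J : Finset γ) :
    braidedExpansion q x f l J =
      ∑ p ∈ J, (-q) ^ numLT J p • (if l = p then q⁻¹ else 1) • (x p * f l (J.erase p)) +
        x l * ∑ p ∈ J with p < l, ((q⁻¹ - q) * (-q) ^ numLT J p) • f p (J.erase p) := rfl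

variable {q : k} {l j : γ} {J : Finset γ}

lemma braid_of_mem (q : k) (z : γ → A) (d : Finset γ → A) (hl : l ∈ J) :
    braid q z d l J = q⁻¹ • (d J * z l) := if_pos hl

lemma braid_of_notMem (q : k) (z : γ → A) (d : Finset γ → A) (hl : l ∉ J) :
    braid q z d l J = d J * z l + ∑ j ∈ J with j < l,
      ((q⁻¹ - q) * (-q) ^ numBetween J j l) • (d (insert l (J.erase j)) * z j) := if_neg hl

lemma braid_erase_self (q : k) (z : γ → A) (d : Finset γ → A) (hl : l ∈ J) :
    braid q z d l (J.erase l) = d (J.erase l) * z l + ∑ j ∈ J with j < l,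
      ((q⁻¹ - q) * (-q) ^ numBetween J j l) • (d (J.erase j) * z j) := by
  rw [braid_of_notMem q z d (Finset.notMem_erase l J)]
  congr 1
  refine Finset.sum_congr (by grind) fun j hj => ?_
  rw [numBetween_erase_of_not fun h => h.2.false, Finset.erase_right_comm,
    Finset.insert_erase (by grind)]

lemma sum_smul_braid_erase (hq : q ≠ 0) (z : γ → A) (d : Finset γ → A) (l : γ) (J : Finset γ) :
    ∑ p ∈ J with p < l, ((q⁻¹ - q) * (-q) ^ numLT J p) • braid q z d p (J.erase p) =
      ∑ j ∈ J with j < l,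
        ((q⁻¹ - q) * (-q) ^ (numLT J j + 2 * numBetween J j l)) • (d (J.erase j) * z j) := by
  have h_sub : q⁻¹ - q = -q - (-q)⁻¹ := by rw [inv_neg]; ring
  have h_expand : ∀ p ∈ J.filter (· < l),
      ((q⁻¹ - q) * (-q) ^ numLT J p) • braid q z d p (J.erase p) =
        ((q⁻¹ - q) * (-q) ^ numLT J p) • (d (J.erase p) * z p) + ∑ j ∈ J with j < p,
          ((q⁻¹ - q) * ((q⁻¹ - q) * (-q) ^ (numLT J p + numBetween J j p))) •
            (d (J.erase j) * z j) := fun p hp => by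
    simp only [braid_erase_self q z d (Finset.mem_filter.1 hp).1, smul_add, Finset.smul_sum,
      smul_smul, pow_add]
    congr! 3
    ring
  rw [Finset.sum_congr rfl h_expand, Finset.sum_add_distrib,
    Finset.sum_comm' (s' := fun j => J.filter fun x => j < x ∧ x < l) (t' := J.filter (· < l))
      (by grind), ← Finset.sum_add_distrib]
  refine Finset.sum_congr rfl fun j hj => ?_
  rw [← Finset.sum_smul, ← add_smul, ← Finset.mul_sum, ← mul_add,
    ← pow_numLT_add_sum_between (neg_ne_zero.2 hq) (Finset.mem_filter.1 hj).1, h_sub]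

lemma smul_rowExpansion_insert_erase (q : k) (x : γ → A) (d : Finset γ → A) (hj : j ∈ J)
    (hl : l ∉ J) (hjl : j < l) :
    (-q) ^ numBetween J j l • rowExpansion q x d (insert l (J.erase j)) =
      (-q) ^ (numLT J j + 2 * numBetween J j l) • (x l * d (J.erase j)) +
        ∑ p ∈ J.erase j, (-q) ^ (numLT J p + numBetween (J.erase p) j l) •
          (x p * d (insert l ((J.erase p).erase j))) := by
  have hl' : l ∉ J.erase j := fun h => hl (Finset.mem_of_mem_erase h)
  have h_numLT := numLT_insert_erase_self hj hjl
  rw [numLT_insert_of_le le_rfl] at h_numLT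
  rw [rowExpansion_insert q x d hl', smul_add, smul_smul, ← pow_add, h_numLT, Finset.smul_sum]
  congr 1
  · congr 2
    ring
  · refine Finset.sum_congr rfl fun p hp => ?_
    rw [smul_smul, ← pow_add,
      numBetween_add_numLT_insert_erase hj hl (Finset.mem_of_mem_erase hp) hjl,
      Finset.erase_right_comm]

lemma braid_rowExpansion_of_mem (hq : q ≠ 0) (x z : γ → A) (d : Finset γ → A) (hl : l ∈ J) :
    braid q z (rowExpansion q x d) l J = braidedExpansion q x (braid q z d) l J := by
  have h_off : ∑ p ∈ J.erase l, (-q) ^ numLT J p • (if l = p then q⁻¹ else 1) •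
      (x p * braid q z d l (J.erase p)) =
        q⁻¹ • ((∑ p ∈ J.erase l, (-q) ^ numLT J p • (x p * d (J.erase p))) * z l) := by
    rw [Finset.sum_mul, Finset.smul_sum]
    refine Finset.sum_congr rfl fun p hp => ?_
    have hlp : l ≠ p := (Finset.ne_of_mem_erase hp).symm
    rw [if_neg hlp, braid_of_mem q z d (Finset.mem_erase.2 ⟨hlp, hl⟩), one_smul, mul_smul_comm,
      smul_comm, smul_mul_assoc, mul_assoc]
  have h_cancel : (-q) ^ numLT J l • q⁻¹ • ∑ j ∈ J with j < l,
      ((q⁻¹ - q) * (-q) ^ numBetween J j l) • (d (J.erase j) * z j) =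
        -∑ j ∈ J with j < l,
          ((q⁻¹ - q) * (-q) ^ (numLT J j + 2 * numBetween J j l)) • (d (J.erase j) * z j) := by
    simp only [Finset.smul_sum, smul_smul, ← Finset.sum_neg_distrib, ← neg_smul]
    refine Finset.sum_congr rfl fun j hj => ?_
    obtain ⟨hj, hjl⟩ := Finset.mem_filter.1 hj
    rw [numLT_eq_add_numBetween hj hjl]
    congr 1
    field_simp
    ring
  have h_diag : (-q) ^ numLT J l • q⁻¹ • (x l * braid q z d l (J.erase l)) + x l *
      ∑ j ∈ J with j < l, ((q⁻¹ - q) * (-q) ^ (numLT J j + 2 * numBetween J j l)) •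
        (d (J.erase j) * z j) = q⁻¹ • ((-q) ^ numLT J l • (x l * d (J.erase l)) * z l) := by
    rw [← mul_smul_comm, ← mul_smul_comm, braid_erase_self q z d hl, smul_add, smul_add, h_cancel,
      ← mul_add, neg_add_cancel_right, mul_smul_comm, mul_smul_comm, smul_mul_assoc, mul_assoc,
      smul_comm]
  rw [braidedExpansion_apply, sum_smul_braid_erase hq, ← Finset.add_sum_erase J _ hl, h_off,
    if_pos rfl, add_right_comm, h_diag, ← smul_add, ← add_mul, braid_of_mem q z _ hl, rowExpansion,
    ← Finset.add_sum_erase J _ hl]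

lemma braid_rowExpansion_of_notMem (hq : q ≠ 0) (x z : γ → A) (d : Finset γ → A) (hl : l ∉ J) :
    braid q z (rowExpansion q x d) l J = braidedExpansion q x (braid q z d) l J := by
  have h_left : ∀ j ∈ J.filter (· < l), ((q⁻¹ - q) * (-q) ^ numBetween J j l) •
      (rowExpansion q x d (insert l (J.erase j)) * z j) =
        x l * ((q⁻¹ - q) * (-q) ^ (numLT J j + 2 * numBetween J j l)) • (d (J.erase j) * z j) +
          ∑ p ∈ J.erase j, ((q⁻¹ - q) * (-q) ^ (numLT J p + numBetween (J.erase p) j l)) •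
            (x p * d (insert l ((J.erase p).erase j)) * z j) := fun j hj => by
    obtain ⟨hj, hjl⟩ := Finset.mem_filter.1 hj
    rw [mul_smul, ← smul_mul_assoc ((-q) ^ _), smul_rowExpansion_insert_erase q x d hj hl hjl,
      add_mul, smul_add, Finset.sum_mul, Finset.smul_sum]
    simp only [smul_mul_assoc, smul_smul, mul_smul_comm, mul_assoc]
  have h_right : ∀ p ∈ J, (-q) ^ numLT J p • (if l = p then q⁻¹ else 1) •
      (x p * braid q z d l (J.erase p)) =
        (-q) ^ numLT J p • (x p * d (J.erase p)) * z l + ∑ j ∈ J.erase p with j < l,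
          ((q⁻¹ - q) * (-q) ^ (numLT J p + numBetween (J.erase p) j l)) •
            (x p * d (insert l ((J.erase p).erase j)) * z j) := fun p hp => by
    rw [if_neg (ne_of_mem_of_not_mem hp hl).symm, one_smul,
      braid_of_notMem q z d fun h => hl (Finset.mem_of_mem_erase h)]
    simp only [mul_add, smul_add, Finset.mul_sum, Finset.smul_sum, mul_smul_comm, smul_smul,
      smul_mul_assoc, mul_assoc, pow_add, mul_left_comm]
  rw [braidedExpansion_apply, sum_smul_braid_erase hq, braid_of_notMem q z _ hl,
    Finset.sum_congr rfl h_left, Finset.sum_congr rfl h_right, Finset.sum_add_distrib,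
    Finset.sum_add_distrib, ← Finset.sum_mul, ← Finset.mul_sum, ← rowExpansion,
    Finset.sum_comm' (s' := fun p => (J.erase p).filter (· < l)) (t' := J) (by grind)]
  abel

lemma braid_rowExpansion (hq : q ≠ 0) (x z : γ → A) (d : Finset γ → A) :
    braid q z (rowExpansion q x d) = braidedExpansion q x (braid q z d) := by
  ext l J
  by_cases hl : l ∈ J
  exacts [braid_rowExpansion_of_mem hq x z d hl, braid_rowExpansion_of_notMem hq x z d hl]

end Braiding

section Commutation

variable {k : Type*} [Field k] {A : Type*} [Ring A] [Algebra k A]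
variable {ρ γ : Type*} [LinearOrder ρ] [LinearOrder γ] {q : k} {X : ρ → γ → A}

omit [LinearOrder ρ] in
lemma braid_listMinor_nil (q : k) (X : ρ → γ → A) (z : γ → A) :
    braid q z (listMinor q X []) = fun l J => z l * listMinor q X [] J := by
  ext l J
  rcases eq_or_ne J ∅ with rfl | hJ
  · simp [braid, listMinor]
  · simp [braid, listMinor, hJ]

/-- The `k`-span of the functions obtained by braiding a row of `X` past the minors whose list of
rows lies in `S`. -/
def braidSpan (q : k) (X : ρ → γ → A) (S : Set (List ρ)) : Submodule k (γ → Finset γ → A) :=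
  Submodule.span k {f | ∃ s, ∃ R ∈ S, f = braid q (X s) (listMinor q X R)}

omit [LinearOrder ρ] in
lemma braidedExpansion_mem_braidSpan (hq : q ≠ 0) {r : ρ} {S T : Set (List ρ)}
    (hST : ∀ R ∈ S, r :: R ∈ T) {f : γ → Finset γ → A} (hf : f ∈ braidSpan q X S) :
    braidedExpansion q (X r) f ∈ braidSpan q X T := by
  refine (Submodule.span_le (p := (braidSpan q X T).comap (braidedExpansion q (X r)))).2 ?_ hf
  rintro _ ⟨s, R, hR, rfl⟩
  refine Submodule.subset_span ⟨s, r :: R, hST R hR, ?_⟩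
  rw [listMinor, braid_rowExpansion hq]

omit [LinearOrder ρ] in
lemma listMinor_mul_eq_smul (α : ρ → k) (β : γ → k) {z : A}
    (hz : ∀ i j, X i j * z = (α i * β j) • (z * X i j)) (R : List ρ) (J : Finset γ) :
    listMinor q X R J * z = ((R.map α).prod * ∏ j ∈ J, β j) • (z * listMinor q X R J) := by
  induction R generalizing J with
  | nil =>
    rcases eq_or_ne J ∅ with rfl | hJ
    · simp [listMinor]
    · simp [listMinor, hJ]
  | cons r R ih =>
    simp only [listMinor, rowExpansion, Finset.sum_mul, Finset.mul_sum, Finset.smul_sum]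
    refine Finset.sum_congr rfl fun j hj => ?_
    rw [smul_mul_assoc, mul_assoc, ih, mul_smul_comm, ← mul_assoc, hz,
      ← Finset.mul_prod_erase J β hj, List.map_cons, List.prod_cons, smul_mul_assoc,
      mul_smul_comm, mul_assoc z]
    simp only [smul_smul]
    congr 1
    ring

namespace IsQuantumMatrix

/-- The R-matrix form of the defining relations: one exchange rule for all pairs of entries. -/
lemma exchange (hX : IsQuantumMatrix q X) (hq : q ≠ 0) (r s : ρ) (j l : γ) :
    (if l = j then q⁻¹ else 1) • (X r j * X s l) +
        (if j < l then q⁻¹ - q else 0) • (X r l * X s j) =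
      (if r = s then q⁻¹ else 1) • (X s l * X r j) +
        (if s < r then q⁻¹ - q else 0) • (X r l * X s j) := by
  rcases lt_trichotomy r s with hrs | rfl | hsr
  · rcases lt_trichotomy l j with hlj | rfl | hjl
    · simp [hrs.ne, hrs.not_gt, hlj.ne, hlj.not_gt, hX.anti hrs hlj]
    · simp [hrs.ne, hrs.not_gt, hX.col l hrs, smul_smul, hq]
    · simp only [hrs.ne, hrs.not_gt, hjl, hjl.ne', if_true, if_false, hX.diag hrs hjl]
      module
  · rcases lt_trichotomy l j with hlj | rfl | hjl
    · simp [hlj.ne, hlj.not_gt, hX.row r hlj, smul_smul, hq]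
    · simp
    · simp only [hjl, hjl.ne', lt_irrefl, if_true, if_false, hX.row r hjl]
      module
  · rcases lt_trichotomy l j with hlj | rfl | hjl
    · simp only [hsr, hsr.ne', hlj.ne, hlj.not_gt, if_true, if_false, hX.diag hsr hlj,
        hX.anti hsr hlj]
      module
    · simp only [hsr, hsr.ne', lt_irrefl, if_true, if_false, hX.col l hsr]
      module
    · simp [hsr, hsr.ne', hjl, hjl.ne', hX.anti hsr hjl]

lemma braidedExpansion_mul (hX : IsQuantumMatrix q X) (hq : q ≠ 0) (r s : ρ) (d : Finset γ → A) :
    braidedExpansion q (X r) (fun l J => X s l * d J) =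
      (if r = s then q⁻¹ else 1) • (fun l J => X s l * rowExpansion q (X r) d J) +
        (if s < r then q⁻¹ - q else 0) • (fun l J => X r l * rowExpansion q (X s) d J) := by
  ext l J
  have h_term : ∀ p ∈ J,
      (-q) ^ numLT J p • (if l = p then q⁻¹ else 1) • (X r p * (X s l * d (J.erase p))) +
          (if p < l then X r l * ((q⁻¹ - q) * (-q) ^ numLT J p) • (X s p * d (J.erase p)) else 0) =
        (if r = s then q⁻¹ else 1) • (X s l * (-q) ^ numLT J p • (X r p * d (J.erase p))) +
          (if s < r then q⁻¹ - q else 0) •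
            (X r l * (-q) ^ numLT J p • (X s p * d (J.erase p))) := fun p _ => by
    have h_exchange := congrArg (· * d (J.erase p)) (hX.exchange hq r s p l)
    simp only [add_mul, smul_mul_assoc, mul_assoc] at h_exchange
    simp only [mul_smul_comm]
    split_ifs at h_exchange ⊢ <;> linear_combination (norm := module) (-q) ^ numLT J p • h_exchange
  simp only [braidedExpansion_apply, Finset.sum_filter, rowExpansion, Finset.mul_sum,
    Finset.smul_sum, Pi.add_apply, Pi.smul_apply, ← Finset.sum_add_distrib, mul_ite, mul_zero]
  exact Finset.sum_congr rfl h_term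

lemma mul_listMinor_cons_mem_braidSpan (hX : IsQuantumMatrix q X) (hq : q ≠ 0) {r s : ρ}
    (hrs : r ≤ s) {R : List ρ} {S T : Set (List ρ)} (hST : ∀ R ∈ S, r :: R ∈ T)
    (hR : (fun l J => X s l * listMinor q X R J) ∈ braidSpan q X S) :
    (fun l J => X s l * listMinor q X (r :: R) J) ∈ braidSpan q X T := by
  have h_mem := braidedExpansion_mem_braidSpan hq hST hR
  rw [hX.braidedExpansion_mul hq, if_neg hrs.not_gt, zero_smul, add_zero] at h_mem
  refine (Submodule.smul_mem_iff _ ?_).1 h_mem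
  split_ifs
  exacts [inv_ne_zero hq, one_ne_zero]

lemma mul_listMinor_mem_braidSpan (hX : IsQuantumMatrix q X) (hq : q ≠ 0) (s : ρ) (R : List ρ) :
    (fun l J => X s l * listMinor q X R J) ∈ braidSpan q X {R' | R'.length = R.length} := by
  induction R generalizing s with
  | nil => exact Submodule.subset_span ⟨s, [], rfl, (braid_listMinor_nil q X (X s)).symm⟩
  | cons r R ih =>
    have h_cons (r' : ρ) (R' : List ρ) (hR' : R'.length = R.length) :
        (r' :: R').length = (r :: R).length := congrArg (· + 1) hR'
    rcases le_or_gt r s with hrs | hsr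
    · exact hX.mul_listMinor_cons_mem_braidSpan hq hrs (h_cons r) (ih s)
    · have h_expand := hX.braidedExpansion_mul hq r s (listMinor q X R)
      rw [if_neg hsr.ne', if_pos hsr, one_smul, ← sub_eq_iff_eq_add] at h_expand
      exact h_expand ▸ Submodule.sub_mem _ (braidedExpansion_mem_braidSpan hq (h_cons r) (ih s))
        (Submodule.smul_mem _ _
          (hX.mul_listMinor_cons_mem_braidSpan hq hsr.le (h_cons s) (ih r)))

lemma entry_mul_corner (hX : IsQuantumMatrix q X) (hq : q ≠ 0) {o : ρ} (ho : IsBot o) {w : γ}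
    (hw : IsTop w) (i : ρ) (j : γ) : X i j * X o w =
      ((if i = o then q else 1) * (if j = w then q⁻¹ else 1)) • (X o w * X i j) := by
  rcases (ho i).eq_or_lt with rfl | hoi <;> rcases (hw j).eq_or_lt with rfl | hjw
  · simp [hq]
  · simp [hjw.ne, hX.row o hjw]
  · simp [hoi.ne', hX.col j hoi, hq]
  · simp [hoi.ne', hjw.ne, hX.anti hoi hjw]

lemma exists_listMinor_mul_corner (hX : IsQuantumMatrix q X) (hq : q ≠ 0) {o : ρ} (ho : IsBot o)
    {w : γ} (hw : IsTop w) (R : List ρ) (J : Finset γ) :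
    ∃ c : k, listMinor q X R J * X o w = c • (X o w * listMinor q X R J) :=
  ⟨_, listMinor_mul_eq_smul (if · = o then q else 1) (if · = w then q⁻¹ else 1)
    (hX.entry_mul_corner hq ho hw) R J⟩

end IsQuantumMatrix

end Commutation

section ColumnExpansion

variable {k : Type*} [Field k] {A : Type*} [Ring A] [Algebra k A]
variable {ρ γ : Type*} [LinearOrder ρ] [LinearOrder γ] {q : k} {X : ρ → γ → A}

/-- The quantum Laplace expansion, for the rows `R`, along a column `w` placed to the right of the
columns `J`. -/
def colExpansion (q : k) (X : ρ → γ → A) (w : γ) (R : List ρ) (J : Finset γ) : A :=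
  ∑ r ∈ R.toFinset, (-q)⁻¹ ^ R.idxOf r • (X r w * listMinor q X (R.erase r) J)

namespace IsQuantumMatrix

lemma colExpansion_cons (hX : IsQuantumMatrix q X) {w : γ} (hw : IsTop w) {r : ρ} {R : List ρ}
    (hR : ∀ s ∈ R, s < r) (J : Finset γ) :
    colExpansion q X w (r :: R) J = X r w * listMinor q X R J + (-q)⁻¹ •
      ∑ j ∈ J, (-q) ^ numLT J j • (if j = w then q else 1) •
        (X r j * colExpansion q X w R (J.erase j)) := by
  have h_comm : ∀ s < r, ∀ j, X s w * X r j = (if j = w then q else 1) • (X r j * X s w) :=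
    fun s hsr j => by
      split_ifs with hj
      · rw [hj, hX.col w hsr]
      · rw [hX.anti hsr ((hw j).lt_of_ne hj), one_smul]
  have h_term : ∀ s ∈ R.toFinset, (-q)⁻¹ ^ (r :: R).idxOf s •
      (X s w * listMinor q X ((r :: R).erase s) J) =
        (-q)⁻¹ • ∑ j ∈ J, (-q) ^ numLT J j • (if j = w then q else 1) •
          (X r j * (-q)⁻¹ ^ R.idxOf s • (X s w * listMinor q X (R.erase s) (J.erase j))) :=
    fun s hs => by
      have hsr := hR s (List.mem_toFinset.1 hs)
      rw [List.idxOf_cons_ne _ hsr.ne', List.erase_cons_tail (by simpa using hsr.ne'), listMinor,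
        rowExpansion, pow_succ', mul_smul, Finset.mul_sum, Finset.smul_sum]
      congr 1
      refine Finset.sum_congr rfl fun j _ => ?_
      rw [mul_smul_comm, ← mul_assoc, h_comm s hsr, smul_mul_assoc, mul_smul_comm, mul_assoc]
      simp only [smul_comm ((-q)⁻¹ ^ R.idxOf s)]
  have hr : r ∉ R.toFinset := fun h => (hR r (List.mem_toFinset.1 h)).false
  rw [colExpansion, List.toFinset_cons, Finset.sum_insert hr, Finset.sum_congr rfl h_term,
    ← Finset.smul_sum, Finset.sum_comm, List.idxOf_cons_self, List.erase_cons_head, pow_zero,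
    one_smul]
  simp only [colExpansion, Finset.mul_sum, Finset.smul_sum]

lemma colExpansion_of_notMem (hX : IsQuantumMatrix q X) (hq : q ≠ 0) {w : γ} (hw : IsTop w)
    {R : List ρ} (hR : R.Pairwise (· > ·)) {J : Finset γ} (hJ : w ∉ J) :
    colExpansion q X w R J = (-q)⁻¹ ^ J.card • listMinor q X R (insert w J) := by
  induction R generalizing J with
  | nil => simp [colExpansion, listMinor]
  | cons r R ih =>
    obtain ⟨hr, hR⟩ := List.pairwise_cons.1 hR
    have h_last : numLT J w = J.card :=
      numLT_eq_card fun x hx => (hw x).lt_of_ne (ne_of_mem_of_not_mem hx hJ)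
    rw [hX.colExpansion_cons hw hr, listMinor, rowExpansion_insert q _ _ hJ, h_last, smul_add,
      inv_pow, inv_smul_smul₀ (pow_ne_zero _ (neg_ne_zero.2 hq)), Finset.smul_sum, Finset.smul_sum]
    congr 1
    refine Finset.sum_congr rfl fun j hj => ?_
    rw [ih hR fun h => hJ (Finset.mem_of_mem_erase h), if_neg (ne_of_mem_of_not_mem hj hJ),
      one_smul, numLT_insert_of_le (hw j), mul_smul_comm, ← Finset.card_erase_add_one hj,
      pow_succ, mul_inv, inv_pow]
    module

lemma colExpansion_eq_zero_of_mem (hX : IsQuantumMatrix q X) (hq : q ≠ 0) {w : γ} (hw : IsTop w)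
    {R : List ρ} (hR : R.Pairwise (· > ·)) {J : Finset γ} (hJ : w ∈ J) :
    colExpansion q X w R J = 0 := by
  induction R generalizing J with
  | nil => simp [colExpansion]
  | cons r R ih =>
    obtain ⟨hr, hR⟩ := List.pairwise_cons.1 hR
    have hq' : -q ≠ 0 := neg_ne_zero.2 hq
    have hwJ : w ∉ J.erase w := Finset.notMem_erase w J
    have h_last : numLT J w = (J.erase w).card := by
      rw [← numLT_erase_of_le le_rfl,
        numLT_eq_card fun x hx => (hw x).lt_of_ne (Finset.ne_of_mem_erase hx)]
    have h_other : ∀ j ∈ J.erase w, (-q) ^ numLT J j • (if j = w then q else 1) •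
        (X r j * colExpansion q X w R (J.erase j)) = 0 := fun j hj => by
      rw [ih hR (Finset.mem_erase.2 ⟨(Finset.ne_of_mem_erase hj).symm, hJ⟩), mul_zero, smul_zero,
        smul_zero]
    rw [hX.colExpansion_cons hw hr, ← Finset.add_sum_erase J _ hJ, Finset.sum_eq_zero h_other,
      if_pos rfl, hX.colExpansion_of_notMem hq hw hR hwJ, Finset.insert_erase hJ, h_last,
      mul_smul_comm, add_zero, inv_pow]
    match_scalars
    field_simp
    ring

end IsQuantumMatrix

end ColumnExpansion

section RightIdeal

variable {k : Type*} [Field k] {A : Type*} [Ring A] [Algebra k A]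

lemma mul_mem_span_of_forall_mem {a : A} {s : Set A}
    (h : ∀ x ∈ s, a * x ∈ Submodule.span Aᵐᵒᵖ s) {x : A} (hx : x ∈ Submodule.span Aᵐᵒᵖ s) :
    a * x ∈ Submodule.span Aᵐᵒᵖ s :=
  Submodule.span_le (p := (Submodule.span Aᵐᵒᵖ s).comap
    (DistribSMul.toLinearMap Aᵐᵒᵖ A a)) |>.2 h hx

lemma mul_mem_of_mem_adjoin {s : Set A} {N : Submodule Aᵐᵒᵖ A}
    (h : ∀ a ∈ s, ∀ x ∈ N, a * x ∈ N) {a : A} (ha : a ∈ Algebra.adjoin k s) {x : A}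
    (hx : x ∈ N) : a * x ∈ N := by
  induction ha using Algebra.adjoin_induction generalizing x with
  | mem a ha => exact h a ha x hx
  | algebraMap c => exact Algebra.smul_def c x ▸ N.smul_of_tower_mem c hx
  | add a b _ _ iha ihb => exact add_mul a b x ▸ N.add_mem (iha hx) (ihb hx)
  | mul a b _ _ iha ihb => exact mul_assoc a b x ▸ iha (ihb hx)

lemma mem_twoSidedIdeal_span_iff {s t : Set A} (hts : t ⊆ s)
    (hst : s ⊆ Submodule.span Aᵐᵒᵖ t)
    (h : ∀ a, ∀ x ∈ Submodule.span Aᵐᵒᵖ t, a * x ∈ Submodule.span Aᵐᵒᵖ t) (b : A) :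
    b ∈ TwoSidedIdeal.span s ↔ b ∈ Submodule.span Aᵐᵒᵖ t := by
  let N := Submodule.span Aᵐᵒᵖ t
  let I : TwoSidedIdeal A := .mk' N N.zero_mem N.add_mem N.neg_mem (h _ _)
    (N.smul_mem (MulOpposite.op _))
  constructor
  · intro hb
    have h_le : TwoSidedIdeal.span s ≤ I := TwoSidedIdeal.span_le.2 fun x hx =>
      (TwoSidedIdeal.mem_mk' ..).2 (hst hx)
    exact (TwoSidedIdeal.mem_mk' ..).1 (h_le hb)
  · intro hb
    induction hb using Submodule.span_induction with
    | mem x hx => exact TwoSidedIdeal.subset_span (hts hx)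
    | zero => exact zero_mem _
    | add x y _ _ hx hy => exact add_mem hx hy
    | smul c x _ hx => exact TwoSidedIdeal.mul_mem_right _ _ _ hx

end RightIdeal

section CornerMinors

variable {k : Type*} [Field k] {A : Type*} [Ring A] [Algebra k A]
variable {ρ γ : Type*} [LinearOrder ρ] [LinearOrder γ] {q : k} {X : ρ → γ → A}

/-- The right ideal generated by the minors with `t` rows, the row `o` and the column `w` among
their rows and columns. -/
def cornerMinorIdeal (q : k) (X : ρ → γ → A) (o : ρ) (w : γ) (t : ℕ) : Submodule Aᵐᵒᵖ A :=
  Submodule.span Aᵐᵒᵖ {x | ∃ R J, R.length = t ∧ o ∈ R ∧ w ∈ J ∧ x = listMinor q X R J}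

variable {o : ρ} {w : γ} {t : ℕ} {R : List ρ} {J : Finset γ}

omit [LinearOrder ρ] in
lemma listMinor_mem_cornerMinorIdeal (hR : R.length = t) (hoR : o ∈ R) (hwJ : w ∈ J) :
    listMinor q X R J ∈ cornerMinorIdeal q X o w t :=
  Submodule.subset_span ⟨R, J, hR, hoR, hwJ, rfl⟩

omit [LinearOrder ρ] in
lemma braid_mem_cornerMinorIdeal (hw : IsTop w) (z : γ → A) (hR : R.length = t) (hoR : o ∈ R)
    (hwJ : w ∈ J) (l : γ) : braid q z (listMinor q X R) l J ∈ cornerMinorIdeal q X o w t := by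
  have h_mem (K : Finset γ) (hK : w ∈ K) (a : A) :
      listMinor q X R K * a ∈ cornerMinorIdeal q X o w t :=
    Submodule.smul_mem _ (MulOpposite.op a) (listMinor_mem_cornerMinorIdeal hR hoR hK)
  rw [braid]
  split_ifs
  · exact Submodule.smul_of_tower_mem _ _ (h_mem J hwJ _)
  · refine Submodule.add_mem _ (h_mem J hwJ _) (Submodule.sum_mem _ fun j hj => ?_)
    have hwj : w ≠ j := fun h => (hw l).not_gt (h ▸ (Finset.mem_filter.1 hj).2)
    exact Submodule.smul_of_tower_mem _ _
      (h_mem _ (Finset.mem_insert_of_mem (Finset.mem_erase.2 ⟨hwj, hwJ⟩)) _)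

omit [LinearOrder ρ] in
lemma apply_mem_cornerMinorIdeal_of_mem_braidSpan (hw : IsTop w) {f : γ → Finset γ → A}
    (hf : f ∈ braidSpan q X {R | R.length = t ∧ o ∈ R}) (l : γ) (hwJ : w ∈ J) :
    f l J ∈ cornerMinorIdeal q X o w t := by
  refine (Submodule.span_le (p := ((cornerMinorIdeal q X o w t).restrictScalars k).comap
    (LinearMap.proj J ∘ₗ LinearMap.proj l))).2 ?_ hf
  rintro _ ⟨s, R, ⟨hR, hoR⟩, rfl⟩
  exact braid_mem_cornerMinorIdeal hw (X s) hR hoR hwJ l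

namespace IsQuantumMatrix

lemma entry_mul_mem_cornerMinorIdeal (hX : IsQuantumMatrix q X) (hq : q ≠ 0) (ho : IsBot o)
    (hw : IsTop w) (s : ρ) (l : γ) {x : A} (hx : x ∈ cornerMinorIdeal q X o w t) :
    X s l * x ∈ cornerMinorIdeal q X o w t := by
  refine mul_mem_span_of_forall_mem ?_ hx
  rintro _ ⟨R, J, hR, hoR, hwJ, rfl⟩
  obtain ⟨c, hc⟩ := hX.exists_listMinor_eq_smul_of_perm hq (List.perm_cons_erase hoR)
  have h_length := List.length_erase_add_one hoR
  have h_braid := hX.mul_listMinor_cons_mem_braidSpan hq (ho s)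
    (T := {R' | R'.length = t ∧ o ∈ R'})
    (fun R' (hR' : R'.length = (R.erase o).length) => ⟨by grind, List.mem_cons_self⟩)
    (hX.mul_listMinor_mem_braidSpan hq s (R.erase o))
  rw [hc, Pi.smul_apply, mul_smul_comm]
  exact Submodule.smul_of_tower_mem _ _
    (apply_mem_cornerMinorIdeal_of_mem_braidSpan hw h_braid l hwJ)

lemma inv_mul_mem_cornerMinorIdeal (hX : IsQuantumMatrix q X) (hq : q ≠ 0) (ho : IsBot o)
    (hw : IsTop w) {v : Aˣ} (hv : X o w = v) {x : A} (hx : x ∈ cornerMinorIdeal q X o w t) :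
    ↑v⁻¹ * x ∈ cornerMinorIdeal q X o w t := by
  refine mul_mem_span_of_forall_mem ?_ hx
  rintro _ ⟨R, J, hR, hoR, hwJ, rfl⟩
  obtain ⟨c, hc⟩ := hX.exists_listMinor_mul_corner hq ho hw R J
  have h_comm : ↑v⁻¹ * listMinor q X R J = c • (listMinor q X R J * ↑v⁻¹) := by
    rw [Units.inv_mul_eq_iff_eq_mul, mul_smul_comm, ← mul_assoc, ← smul_mul_assoc, ← hv, ← hc, hv,
      Units.mul_inv_cancel_right]
  rw [h_comm]
  exact Submodule.smul_of_tower_mem _ _ (Submodule.smul_mem _ (MulOpposite.op _)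
    (listMinor_mem_cornerMinorIdeal hR hoR hwJ))

lemma corner_mul_mem_cornerMinorIdeal_iff (hX : IsQuantumMatrix q X) (hq : q ≠ 0) (ho : IsBot o)
    (hw : IsTop w) (hu : IsUnit (X o w)) {x : A} :
    X o w * x ∈ cornerMinorIdeal q X o w t ↔ x ∈ cornerMinorIdeal q X o w t := by
  obtain ⟨v, hv⟩ := hu
  refine ⟨fun hx => ?_, hX.entry_mul_mem_cornerMinorIdeal hq ho hw o w⟩
  rw [← Units.inv_mul_cancel_left v x, hv]
  exact hX.inv_mul_mem_cornerMinorIdeal hq ho hw hv.symm hx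

lemma listMinor_mem_cornerMinorIdeal_of_rowExpansion (hX : IsQuantumMatrix q X) (hq : q ≠ 0)
    (ho : IsBot o) (hw : IsTop w) (hu : IsUnit (X o w)) (hwJ : w ∉ J)
    (h_mem : ∀ j ∈ J, listMinor q X R (insert w (J.erase j)) ∈ cornerMinorIdeal q X o w t)
    (h_cons : listMinor q X (o :: R) (insert w J) ∈ cornerMinorIdeal q X o w t) :
    listMinor q X R J ∈ cornerMinorIdeal q X o w t := by
  rw [listMinor, rowExpansion_insert q _ _ hwJ] at h_cons
  have h_sum : ∑ j ∈ J, (-q) ^ numLT (insert w J) j •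
      (X o j * listMinor q X R (insert w (J.erase j))) ∈ cornerMinorIdeal q X o w t :=
    Submodule.sum_mem _ fun j hj => Submodule.smul_of_tower_mem _ _
      (hX.entry_mul_mem_cornerMinorIdeal hq ho hw o j (h_mem j hj))
  rw [← hX.corner_mul_mem_cornerMinorIdeal_iff hq ho hw hu]
  refine (Submodule.smul_mem_iff ((cornerMinorIdeal q X o w t).restrictScalars k)
    (pow_ne_zero (numLT J w) (neg_ne_zero.2 hq))).1 ?_
  exact (Submodule.add_mem_iff_left _ h_sum).1 h_cons

lemma listMinor_mem_cornerMinorIdeal_of_row_mem (hX : IsQuantumMatrix q X) (hq : q ≠ 0)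
    (ho : IsBot o) (hw : IsTop w) (hu : IsUnit (X o w)) (hR : R.length = t) (hoR : o ∈ R) :
    listMinor q X R J ∈ cornerMinorIdeal q X o w t := by
  by_cases hwJ : w ∈ J
  · exact listMinor_mem_cornerMinorIdeal hR hoR hwJ
  · refine hX.listMinor_mem_cornerMinorIdeal_of_rowExpansion hq ho hw hu hwJ
      (fun j _ => listMinor_mem_cornerMinorIdeal hR hoR (Finset.mem_insert_self w _)) ?_
    rw [hX.listMinor_eq_zero_of_not_nodup hq fun h => (List.nodup_cons.1 h).1 hoR]
    exact Submodule.zero_mem _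

lemma listMinor_mem_cornerMinorIdeal_of_col_mem (hX : IsQuantumMatrix q X) (hq : q ≠ 0)
    (ho : IsBot o) (hw : IsTop w) (hu : IsUnit (X o w)) (hR : R.length = t)
    (h_desc : R.Pairwise (· > ·)) (hwJ : w ∈ J) :
    listMinor q X R J ∈ cornerMinorIdeal q X o w t := by
  by_cases hoR : o ∈ R
  · exact listMinor_mem_cornerMinorIdeal hR hoR hwJ
  have h_desc' : (R ++ [o]).Pairwise (· > ·) := by
    refine List.pairwise_append.2 ⟨h_desc, List.pairwise_singleton _ o, fun r hr s hs => ?_⟩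
    rw [List.mem_singleton.1 hs]
    exact (ho r).lt_of_ne (ne_of_mem_of_not_mem hr hoR).symm
  have h_zero := hX.colExpansion_eq_zero_of_mem hq hw h_desc' hwJ
  rw [colExpansion, ← Finset.add_sum_erase _ _ (a := o) (by simp),
    List.erase_append_right _ hoR, List.erase_cons_head, List.append_nil] at h_zero
  have h_sum : ∑ r ∈ (R ++ [o]).toFinset.erase o, (-q)⁻¹ ^ (R ++ [o]).idxOf r •
      (X r w * listMinor q X ((R ++ [o]).erase r) J) ∈ cornerMinorIdeal q X o w t := by
    refine Submodule.sum_mem _ fun r hr => Submodule.smul_of_tower_mem _ _ <|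
      hX.entry_mul_mem_cornerMinorIdeal hq ho hw r w ?_
    obtain ⟨hro, hr⟩ := Finset.mem_erase.1 hr
    refine listMinor_mem_cornerMinorIdeal ?_ ((List.mem_erase_of_ne hro.symm).2 (by simp)) hwJ
    simp [List.length_erase_of_mem (List.mem_toFinset.1 hr), hR]
  rw [← hX.corner_mul_mem_cornerMinorIdeal_iff hq ho hw hu]
  refine (Submodule.smul_mem_iff ((cornerMinorIdeal q X o w t).restrictScalars k)
    (pow_ne_zero ((R ++ [o]).idxOf o) (inv_ne_zero (neg_ne_zero.2 hq)))).1 ?_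
  exact (Submodule.add_mem_iff_left _ h_sum).1 (h_zero ▸ Submodule.zero_mem _)

lemma listMinor_mem_cornerMinorIdeal_of_pairwise (hX : IsQuantumMatrix q X) (hq : q ≠ 0)
    (ho : IsBot o) (hw : IsTop w) (hu : IsUnit (X o w)) (hR : R.length = t) (ht : 0 < t)
    (h_desc : R.Pairwise (· > ·)) :
    listMinor q X R J ∈ cornerMinorIdeal q X o w t := by
  by_cases hwJ : w ∈ J
  · exact hX.listMinor_mem_cornerMinorIdeal_of_col_mem hq ho hw hu hR h_desc hwJ
  refine hX.listMinor_mem_cornerMinorIdeal_of_rowExpansion hq ho hw hu hwJ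
      (fun j _ => hX.listMinor_mem_cornerMinorIdeal_of_col_mem hq ho hw hu hR h_desc
        (Finset.mem_insert_self w _)) ?_
  obtain ⟨r, R, rfl⟩ := List.exists_cons_of_length_pos (hR ▸ ht)
  obtain ⟨c, hc⟩ := hX.exists_listMinor_eq_smul_of_perm hq (List.Perm.swap r o R)
  rw [hc, listMinor, Pi.smul_apply]
  exact Submodule.smul_of_tower_mem _ _ <| Submodule.sum_mem _ fun j _ =>
    Submodule.smul_of_tower_mem _ _ <| hX.entry_mul_mem_cornerMinorIdeal hq ho hw r j <|
      hX.listMinor_mem_cornerMinorIdeal_of_row_mem hq ho hw hu hR List.mem_cons_self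

end IsQuantumMatrix

end CornerMinors

section QuantumDeterminant

open Equiv.Perm (decomposeFin)

/-- The permutation of `Fin (t + 1)` with first value `p` whose other values are in the same
relative order as those of `τ`. -/
def consPerm {t : ℕ} (p : Fin (t + 1)) (τ : Equiv.Perm (Fin t)) : Equiv.Perm (Fin (t + 1)) :=
  p.cycleRange.symm * decomposeFin.symm (0, τ)

@[simp]
lemma consPerm_zero {t : ℕ} (p : Fin (t + 1)) (τ : Equiv.Perm (Fin t)) : consPerm p τ 0 = p := by
  simp [consPerm]

@[simp]
lemma consPerm_succ {t : ℕ} (p : Fin (t + 1)) (τ : Equiv.Perm (Fin t)) (i : Fin t) :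
    consPerm p τ i.succ = p.succAbove (τ i) := by
  simp [consPerm]

lemma consPerm_bijective (t : ℕ) :
    Function.Bijective (Function.uncurry (consPerm (t := t))) := by
  refine (Fintype.bijective_iff_injective_and_card _).2 ⟨?_, ?_⟩
  · rintro ⟨p, τ⟩ ⟨p', τ'⟩ h
    obtain rfl : p = p' := by simpa using DFunLike.congr_fun h 0
    obtain rfl : τ = τ' := Equiv.ext fun i => by simpa using DFunLike.congr_fun h i.succ
    rfl
  · simp [Fintype.card_perm, Nat.factorial_succ]

lemma card_filter_consPerm_succ_lt {t : ℕ} (p : Fin (t + 1)) (τ : Equiv.Perm (Fin t)) :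
    (Finset.univ.filter fun i : Fin t => consPerm p τ i.succ < p).card = p := by
  have h_image : (Finset.univ.filter fun i : Fin t => consPerm p τ i.succ < p).map
      ((Fin.succEmb t).trans (consPerm p τ).toEmbedding) = Finset.Iio p := by
    ext x
    obtain ⟨i, rfl⟩ := (consPerm p τ).surjective x
    cases i using Fin.cases <;> simp
  rw [← Finset.card_map, h_image, Fin.card_Iio]

lemma invCount_consPerm {t : ℕ} (p : Fin (t + 1)) (τ : Equiv.Perm (Fin t)) :
    invCount (consPerm p τ) = p + invCount τ := by
  rw [invCount, Finset.card_filter, Fintype.sum_prod_type, Fin.sum_univ_succ, invCount,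
    Finset.card_filter, Fintype.sum_prod_type]
  congr 1
  · rw [Fin.sum_univ_succ]
    simpa [← Finset.card_filter] using card_filter_consPerm_succ_lt p τ
  · refine Finset.sum_congr rfl fun i _ => ?_
    rw [Fin.sum_univ_succ]
    simp

variable {k : Type*} [Field k] {A : Type*} [Ring A] [Algebra k A]

lemma qdet_succ (q : k) {t : ℕ} (M : Fin (t + 1) → Fin (t + 1) → A) :
    qdet q M = ∑ p : Fin (t + 1), (-q) ^ (p : ℕ) •
      (M 0 p * qdet q fun i j => M i.succ (p.succAbove j)) := by
  rw [qdet, ← (consPerm_bijective t).sum_comp, Fintype.sum_prod_type]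
  simp only [qdet, Function.uncurry_apply_pair, invCount_consPerm, List.ofFn_succ, List.prod_cons,
    consPerm_zero, consPerm_succ, pow_add, mul_smul, mul_smul_comm, Finset.mul_sum,
    Finset.smul_sum]

variable {ρ γ : Type*} [LinearOrder γ]

lemma numLT_image_univ {t : ℕ} {c : Fin t → γ} (hc : StrictMono c) (p : Fin t) :
    numLT (Finset.univ.image c) (c p) = p := by
  rw [numLT, Finset.filter_image, Finset.card_image_of_injective _ hc.injective]
  simp only [hc.lt_iff_lt, Finset.filter_gt_eq_Iio, Fin.card_Iio]

lemma image_univ_erase {t : ℕ} {c : Fin (t + 1) → γ} (hc : Function.Injective c)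
    (p : Fin (t + 1)) :
    (Finset.univ.image c).erase (c p) = Finset.univ.image (c ∘ p.succAbove) := by
  rw [← Finset.image_erase hc, ← Finset.image_image, Fin.image_succAbove_univ,
    ← Finset.compl_singleton]

lemma qdet_eq_listMinor (q : k) (X : ρ → γ → A) {t : ℕ} (f : Fin t → ρ) {c : Fin t → γ}
    (hc : StrictMono c) :
    qdet q (fun a b => X (f a) (c b)) =
      listMinor q X (List.ofFn f) (Finset.univ.image c) := by
  induction t with
  | zero => simp [qdet, listMinor, invCount]
  | succ t ih =>
    rw [qdet_succ, List.ofFn_succ, listMinor, rowExpansion, Finset.sum_image hc.injective.injOn]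
    refine Finset.sum_congr rfl fun p _ => ?_
    rw [numLT_image_univ hc, image_univ_erase hc.injective,
      ← ih (fun i => f i.succ) (hc.comp (Fin.strictMono_succAbove p))]
    rfl

lemma qminor_eq_listMinor (q : k) {m n t : ℕ} (X : Fin m → Fin n → A) {I : Finset (Fin m)}
    {J : Finset (Fin n)} (hI : I.card = t) (hJ : J.card = t) :
    qminor q X I J hI hJ = listMinor q X (I.sort (· ≤ ·)) J := by
  have h_rows : List.ofFn (I.orderEmbOfFin hI) = I.sort (· ≤ ·) :=
    List.ext_getElem (by simp [hI]) fun i _ _ => by simp [Finset.orderEmbOfFin_apply]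
  have h_cols : Finset.univ.image (J.orderEmbOfFin hJ) = J := by simp
  rw [← h_rows]
  conv_rhs => rw [← h_cols]
  exact qdet_eq_listMinor q X _ (J.orderEmbOfFin hJ).strictMono

end QuantumDeterminant

section Localisation

lemma adjoin_range_qX (k : Type*) [Field k] (q : k) (m n : ℕ) :
    Algebra.adjoin k (Set.range (Function.uncurry (qX k q m n))) = ⊤ := by
  have h_range : Set.range (Function.uncurry (qX k q m n)) =
      RingQuot.mkAlgHom k (QMRel k q m n) '' Set.range (FreeAlgebra.ι k) := by
    rw [← Set.range_comp]
    rfl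
  rw [h_range, ← AlgHom.map_adjoin, FreeAlgebra.adjoin_range_ι, Algebra.map_top,
    AlgHom.range_eq_top]
  exact RingQuot.mkAlgHom_surjective k _

variable {k : Type*} [Field k] {B : Type*} [Ring B] [Algebra k B] {q : k} {m n : ℕ}

lemma isQMat_map_qX (φ : OqM k q m n →ₐ[k] B) : IsQMat q fun i j => φ (qX k q m n i j) := by
  have h_rel {x y} (hxy : QMRel k q m n x y) : φ (RingQuot.mkAlgHom k (QMRel k q m n) x) =
      φ (RingQuot.mkAlgHom k (QMRel k q m n) y) := congrArg φ (RingQuot.mkAlgHom_rel k hxy)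
  refine ⟨fun i j l hjl => ?_, fun i r j hir => ?_, fun i r j l hir hjl => ?_,
    fun i r j l hir hjl => ?_⟩
  · simpa [qX] using h_rel (.row i j l hjl)
  · simpa [qX] using h_rel (.col i r j hir)
  · simpa [qX] using h_rel (.anti i r j l hir hjl)
  · rw [sub_eq_iff_eq_add']
    simpa only [qX, map_add, map_mul, map_smul] using h_rel (.diag i r j l hir hjl)

lemma adjoin_insert_range_map_qX {φ : OqM k q m n →ₐ[k] B} {u : B}
    (hloc : ∀ b : B, ∃ (a : OqM k q m n) (p : ℕ), b = φ a * u ^ p) :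
    Algebra.adjoin k (insert u (Set.range (Function.uncurry fun i j => φ (qX k q m n i j)))) =
      ⊤ := by
  refine eq_top_iff.2 fun b _ => ?_
  obtain ⟨a, p, rfl⟩ := hloc b
  have h_range : Set.range (Function.uncurry fun i j => φ (qX k q m n i j)) =
      φ '' Set.range (Function.uncurry (qX k q m n)) := by
    rw [← Set.range_comp]
    rfl
  have ha : φ a ∈ Algebra.adjoin k
      (Set.range (Function.uncurry fun i j => φ (qX k q m n i j))) := by
    rw [h_range, ← AlgHom.map_adjoin, adjoin_range_qX, Algebra.map_top]
    exact φ.mem_range_self a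
  exact mul_mem (Algebra.adjoin_mono (Set.subset_insert _ _) ha)
    (pow_mem (Algebra.subset_adjoin (Set.mem_insert _ _)) p)

variable {X : Fin m → Fin n → B} {o : Fin m} {w : Fin n} {t : ℕ}

lemma IsQMat.span_qminor_eq_cornerMinorIdeal (hX : IsQMat q X) (hq : q ≠ 0) :
    Submodule.span Bᵐᵒᵖ {x : B | ∃ (I : Finset (Fin m)) (J : Finset (Fin n)) (hI : I.card = t)
      (hJ : J.card = t), o ∈ I ∧ w ∈ J ∧ x = qminor q X I J hI hJ} =
      cornerMinorIdeal q X o w t := by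
  refine le_antisymm (Submodule.span_le.2 ?_) (Submodule.span_le.2 ?_)
  · rintro _ ⟨I, J, hI, hJ, hoI, hwJ, rfl⟩
    rw [qminor_eq_listMinor]
    exact listMinor_mem_cornerMinorIdeal (by simp [hI]) (by simp [hoI]) hwJ
  · rintro _ ⟨R, J, hR, hoR, hwJ, rfl⟩
    by_cases h_nodup : R.Nodup
    swap
    · rw [hX.isQuantumMatrix.listMinor_eq_zero_of_not_nodup hq h_nodup]
      exact Submodule.zero_mem _
    by_cases hJ : J.card = t
    swap
    · rw [listMinor_eq_zero_of_card_ne q X (hR ▸ hJ)]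
      exact Submodule.zero_mem _
    obtain ⟨c, hc⟩ := hX.isQuantumMatrix.exists_listMinor_eq_smul_sort hq h_nodup
    have hI : R.toFinset.card = t := by rw [List.toFinset_card_of_nodup h_nodup, hR]
    rw [hc, Pi.smul_apply, ← qminor_eq_listMinor q X hI hJ]
    exact Submodule.smul_of_tower_mem _ _
      (Submodule.subset_span ⟨_, J, hI, hJ, List.mem_toFinset.2 hoR, hwJ, rfl⟩)

lemma IsQMat.qminor_mem_cornerMinorIdeal (hX : IsQMat q X) (hq : q ≠ 0) (ho : IsBot o)
    (hw : IsTop w) (hu : IsUnit (X o w)) (ht : 0 < t) {I : Finset (Fin m)} {J : Finset (Fin n)}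
    (hI : I.card = t) (hJ : J.card = t) :
    qminor q X I J hI hJ ∈ cornerMinorIdeal q X o w t := by
  obtain ⟨c, hc⟩ := hX.isQuantumMatrix.exists_listMinor_eq_smul_of_perm hq
    (I.sort (· ≤ ·)).reverse_perm.symm
  rw [qminor_eq_listMinor, hc, Pi.smul_apply]
  exact Submodule.smul_of_tower_mem _ _ <|
    hX.isQuantumMatrix.listMinor_mem_cornerMinorIdeal_of_pairwise hq ho hw hu (by simp [hI]) ht
      (List.pairwise_reverse.2 I.sortedLT_sort.pairwise)

end Localisation

theorem localised_ideal_eq_right_ideal_special_minors_general {k B : Type*} [Field k]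
    [Ring B] [Algebra k B] {q : k} (hq : q ≠ 0) {m n : ℕ} {X : Fin m → Fin n → B}
    (hX : IsQMat q X) {o : Fin m} (ho : IsBot o) {w : Fin n} (hw : IsTop w) {v : Bˣ}
    (hv : X o w = v)
    (hgen : Algebra.adjoin k (insert ↑v⁻¹ (Set.range (Function.uncurry X))) = ⊤)
    {t : ℕ} (ht : 1 ≤ t) (b : B) :
    b ∈ TwoSidedIdeal.span {x : B |
        ∃ (I : Finset (Fin m)) (J : Finset (Fin n)) (hI : I.card = t) (hJ : J.card = t),
          x = qminor q X I J hI hJ} ↔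
    b ∈ Submodule.span Bᵐᵒᵖ {x : B |
        ∃ (I : Finset (Fin m)) (J : Finset (Fin n)) (hI : I.card = t) (hJ : J.card = t),
          o ∈ I ∧ w ∈ J ∧ x = qminor q X I J hI hJ} := by
  refine mem_twoSidedIdeal_span_iff ?_ ?_ (fun a x hx => ?_) b
  · rintro _ ⟨I, J, hI, hJ, -, -, rfl⟩
    exact ⟨I, J, hI, hJ, rfl⟩
  · rintro _ ⟨I, J, hI, hJ, rfl⟩
    rw [hX.span_qminor_eq_cornerMinorIdeal hq]
    exact hX.qminor_mem_cornerMinorIdeal hq ho hw (hv ▸ v.isUnit) ht hI hJ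
  · rw [hX.span_qminor_eq_cornerMinorIdeal hq] at hx ⊢
    refine mul_mem_of_mem_adjoin ?_ (hgen ▸ Algebra.mem_top : a ∈ Algebra.adjoin k _) hx
    rintro _ (rfl | ⟨⟨s, l⟩, rfl⟩) y hy
    · exact hX.isQuantumMatrix.inv_mul_mem_cornerMinorIdeal hq ho hw hv hy
    · exact hX.isQuantumMatrix.entry_mul_mem_cornerMinorIdeal hq ho hw s l hy

/-- In the localisation `O_q(M_{m,n})[X_{1n}⁻¹]`, the ideal generated by all `t × t` quantum
minors coincides with the right ideal generated by the minors `[I|J]` with `1 ∈ I` and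
`n ∈ J`. -/
theorem localised_ideal_eq_right_ideal_special_minors {k B : Type*} [Field k]
    [Ring B] [Algebra k B]
    (q : k) (hq : q ≠ 0) {m n : ℕ} (hm : 2 ≤ m) (hn : 2 ≤ n)
    (φ : OqM k q m n →ₐ[k] B) (hφ : Function.Injective φ) (u : B)
    (hu1 : φ (qX k q m n ⟨0, by omega⟩ ⟨n - 1, by omega⟩) * u = 1)
    (hu2 : u * φ (qX k q m n ⟨0, by omega⟩ ⟨n - 1, by omega⟩) = 1)
    (hloc : ∀ b : B, ∃ (a : OqM k q m n) (p : ℕ), b = φ a * u ^ p)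
    (t : ℕ) (ht1 : 1 ≤ t) (ht : t ≤ min m n) :
    ∀ b : B,
      b ∈ TwoSidedIdeal.span {x : B |
          ∃ (I : Finset (Fin m)) (J : Finset (Fin n)) (hI : I.card = t) (hJ : J.card = t),
            x = qminor q (fun i j => φ (qX k q m n i j)) I J hI hJ} ↔
      b ∈ Submodule.span Bᵐᵒᵖ {x : B |
          ∃ (I : Finset (Fin m)) (J : Finset (Fin n)) (hI : I.card = t) (hJ : J.card = t),
            (⟨0, by omega⟩ : Fin m) ∈ I ∧ (⟨n - 1, by omega⟩ : Fin n) ∈ J ∧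
            x = qminor q (fun i j => φ (qX k q m n i j)) I J hI hJ} := by
  exact localised_ideal_eq_right_ideal_special_minors_general hq (isQMat_map_qX φ)
    (fun _ => Nat.zero_le _) (fun j => Nat.le_sub_one_of_lt j.isLt) (v := ⟨_, u, hu1, hu2⟩) rfl
    (adjoin_insert_range_map_qX hloc) ht1
end
end
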